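/- arXiv:1806.10308 — 2 statements merged into one kernel-verified Lean document; each statement's English description precedes it below -/
import Mathlib

section
/- Let {p_i}_{i=1}^n be the column-sampling distribution with p_min = min_{i∈[n]} p_i. Assume M has rank r. If d ≥ 7 μ(r) r (t + ln r) / (n p_min), then with probability at least 1 − e^{−t}, the matrix A ∈ ℝ^{m×d} formed by the d sampled and rescaled columns satisfies rank(A) = r. -/
/-! The columns of `M` are the images `B v_i` of the rows `v_i` of `V̄` under a matrix `B` of rank
`r` (`exists_factor`), so the sample has rank `r` as soon as the sampled rows `v_{c_1}, …, v_{c_d}`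
span `ℝ^r` (`rank_sampleA`).

The corank `r - dim span (v_{c_1}, …, v_{c_d})` contracts in expectation with every new sample. If
`W` is the current span, the projections of the `v_i` to `Wᗮ` have squared norms summing to
`dim Wᗮ`, because `V̄ᵀ V̄ = 1`; each of them is at most `K = μ(r) r / n`, and it vanishes when
`v_i ∈ W`. Hence at least `dim Wᗮ / K` of the rows lie outside `W`, so the corank drops with
probability at least `p_min · dim Wᗮ / K` (`corank_step`). The expected corank after `d` samples
is therefore at most `r exp (-d p_min / K)` (`expected_corank_le`), and Markov's inequality bounds
the failure probability by `e^{-t}` once `d ≥ K (t + ln r) / p_min`. This needs no matrix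
concentration inequality, and the factor `7` in the assumption is slack. -/

open MeasureTheory Matrix

/-- Squared Euclidean norm of the `i`-th row of a matrix. -/
noncomputable def rowNormSq {m k : ℕ} (U : Matrix (Fin m) (Fin k) ℝ) (i : Fin m) : ℝ :=
  ∑ j, (U i j) ^ 2

/-- `U` and `V` consist of the top-`k` left and right singular vectors of `A`. -/
def IsTopSVD {m n k : ℕ} (A : Matrix (Fin m) (Fin n) ℝ)
    (U : Matrix (Fin m) (Fin k) ℝ) (V : Matrix (Fin n) (Fin k) ℝ) : Prop :=
  ∃ (hkm : k ≤ m) (hkn : k ≤ n),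
    ∃ (Uf : Matrix (Fin m) (Fin m) ℝ) (Vf : Matrix (Fin n) (Fin n) ℝ)
      (σ : Fin (min m n) → ℝ),
      Ufᵀ * Uf = 1 ∧ Vfᵀ * Vf = 1 ∧
      (∀ i j, i ≤ j → σ j ≤ σ i) ∧ (∀ i, 0 ≤ σ i) ∧
      A = Uf * (Matrix.of fun (i : Fin m) (j : Fin n) =>
            if h : (i : ℕ) = (j : ℕ) ∧ (i : ℕ) < min m n then σ ⟨i, h.2⟩ else 0) * Vfᵀ ∧
      U = Uf.submatrix id (Fin.castLE hkm) ∧ V = Vf.submatrix id (Fin.castLE hkn)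

/-- `U` consists of the top-`k` left singular vectors of `A`. -/
def IsTopLeftSingular {m n k : ℕ} (A : Matrix (Fin m) (Fin n) ℝ)
    (U : Matrix (Fin m) (Fin k) ℝ) : Prop :=
  ∃ V : Matrix (Fin n) (Fin k) ℝ, IsTopSVD A U V

/-- The incoherence `μ(r)` computed from top-`r` singular vector matrices `U`, `V`. -/
noncomputable def incoh {m n r : ℕ} (U : Matrix (Fin m) (Fin r) ℝ)
    (V : Matrix (Fin n) (Fin r) ℝ) : ℝ :=
  max (⨆ i : Fin m, ((m : ℝ) / r) * rowNormSq U i)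
      (⨆ i : Fin n, ((n : ℝ) / r) * rowNormSq V i)

/-- The incoherence `μ̂(r̂)` of a matrix with orthonormal columns. -/
noncomputable def incohU {m k : ℕ} (U : Matrix (Fin m) (Fin k) ℝ) : ℝ :=
  ⨆ i : Fin m, ((m : ℝ) / k) * rowNormSq U i

/-- Squared Frobenius norm. -/
noncomputable def frobSq {m n : ℕ} (A : Matrix (Fin m) (Fin n) ℝ) : ℝ :=
  ∑ i, ∑ j, (A i j) ^ 2

/-- Frobenius norm. -/
noncomputable def frobNorm {m n : ℕ} (A : Matrix (Fin m) (Fin n) ℝ) : ℝ :=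
  Real.sqrt (frobSq A)

/-- The column-based incoherence `μ(M) = n · max_j ‖m_j‖² / ‖M‖_F²`. -/
noncomputable def incohM {m n : ℕ} (M : Matrix (Fin m) (Fin n) ℝ) : ℝ :=
  (n : ℝ) * (⨆ j : Fin n, ∑ i, (M i j) ^ 2) / frobSq M

/-- Squared Frobenius-norm error `‖M - M_r‖_F²` of a best rank-`r` approximation of `M`. -/
noncomputable def rankApproxErrSq {m n : ℕ} (M : Matrix (Fin m) (Fin n) ℝ) (r : ℕ) : ℝ :=
  sInf {x : ℝ | ∃ N : Matrix (Fin m) (Fin n) ℝ, N.rank ≤ r ∧ x = frobSq (M - N)}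

/-- Smallest eigenvalue of a symmetric matrix, as the infimum of the Rayleigh quotient. -/
noncomputable def lambdaMin {k : ℕ} (B : Matrix (Fin k) (Fin k) ℝ) : ℝ :=
  ⨅ x : {x : Fin k → ℝ // ∑ j, (x j) ^ 2 = 1}, x.1 ⬝ᵥ B.mulVec x.1

/-- Spectral (operator) norm of a matrix. -/
noncomputable def specNorm {a b : ℕ} (B : Matrix (Fin a) (Fin b) ℝ) : ℝ :=
  ⨆ x : {x : Fin b → ℝ // ∑ j, (x j) ^ 2 = 1}, Real.sqrt (∑ i, (B.mulVec x.1 i) ^ 2)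

/-- The incoherence `μ(x) = m‖x‖_∞²/‖x‖₂²` of a vector. -/
noncomputable def vecIncoh {m : ℕ} (x : Fin m → ℝ) : ℝ :=
  (m : ℝ) * (⨆ i : Fin m, (x i) ^ 2) / (∑ i, (x i) ^ 2)

/-- The matrix `A` of sampled, rescaled columns: `A^{(j)} = M^{(c_j)}/√(d p_{c_j})`. -/
noncomputable def sampleA {m n : ℕ} (d : ℕ) (M : Matrix (Fin m) (Fin n) ℝ)
    (p : Fin n → ℝ) (c : Fin d → Fin n) : Matrix (Fin m) (Fin d) ℝ :=
  Matrix.of fun i j => M i (c j) / Real.sqrt (d * p (c j))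

/-- Recover a column from its observed entries: `Û(Û_Oᵀ Û_O)⁻¹ Û_Oᵀ v_O`. -/
noncomputable def recoverCol {m k s : ℕ} (U : Matrix (Fin m) (Fin k) ℝ)
    (O : Fin s → Fin m) (v : Fin m → ℝ) : Fin m → ℝ :=
  (U * ((U.submatrix O id)ᵀ * (U.submatrix O id))⁻¹ * (U.submatrix O id)ᵀ).mulVec
    (fun t => v (O t))

/-- The recovered matrix `M̂`: sampled columns are kept, the others are reconstructed. -/
noncomputable def recoverMat {m n d s k : ℕ} (M : Matrix (Fin m) (Fin n) ℝ)
    (c : Fin d → Fin n) (U : Matrix (Fin m) (Fin k) ℝ) (O : Fin n → Fin s → Fin m) :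
    Matrix (Fin m) (Fin n) ℝ :=
  Matrix.of fun i j =>
    if ∃ t, c t = j then M i j else recoverCol U (O j) (fun i' => M i' j) i

/-- The discrete measure on `Fin n` with weights `p`. -/
noncomputable def discMeasure {n : ℕ} (p : Fin n → ℝ) : Measure (Fin n) :=
  ∑ i, ENNReal.ofReal (p i) • Measure.dirac i

/-- The law of the randomness of Algorithm 1: `d` i.i.d. column indices with law `p`, and for
each column a set of `s` entry indices sampled i.i.d. uniformly from `[m]` with replacement. -/
noncomputable def algMeasure (m n d s : ℕ) (p : Fin n → ℝ) :
    Measure ((Fin d → Fin n) × (Fin n → Fin s → Fin m)) :=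
  (Measure.pi fun _ => discMeasure p).prod
    (Measure.pi fun _ => Measure.pi fun _ => discMeasure fun _ : Fin m => (m : ℝ)⁻¹)

/-- Law of a matrix with i.i.d. `N(0,σ²)` entries. -/
noncomputable def gaussMeasure (m n : ℕ) (σ : NNReal) : Measure (Fin m → Fin n → ℝ) :=
  Measure.pi fun _ => Measure.pi fun _ => ProbabilityTheory.gaussianReal 0 (σ ^ 2)

/-- Add a noise realization to a matrix. -/
def addNoise {m n : ℕ} (C : Matrix (Fin m) (Fin n) ℝ) (g : Fin m → Fin n → ℝ) :
    Matrix (Fin m) (Fin n) ℝ :=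
  C + Matrix.of g

/-! ### Corank of a span of random vectors -/

/-- The codimension of a subspace of `ℝ^r`, as a real number. -/
noncomputable def corank {r : ℕ} (W : Submodule ℝ (EuclideanSpace ℝ (Fin r))) : ℝ :=
  (r : ℝ) - Module.finrank ℝ W

lemma corank_nonneg {r : ℕ} (W : Submodule ℝ (EuclideanSpace ℝ (Fin r))) : 0 ≤ corank W := by
  have h := W.finrank_le
  rw [finrank_euclideanSpace_fin] at h
  unfold corank
  have : (Module.finrank ℝ W : ℝ) ≤ r := by exact_mod_cast h
  linarith

lemma corank_eq_finrank_orthogonal {r : ℕ} (W : Submodule ℝ (EuclideanSpace ℝ (Fin r))) :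
    corank W = Module.finrank ℝ Wᗮ := by
  have h := W.finrank_add_finrank_orthogonal
  rw [finrank_euclideanSpace_fin] at h
  have h' : (Module.finrank ℝ W : ℝ) + Module.finrank ℝ Wᗮ = r := by exact_mod_cast h
  unfold corank
  linarith

open scoped Classical in
/-- If the `v i` form a Parseval frame with `‖v i‖² ≤ K`, then at least `corank W / K` of them lie
outside `W`: this bounds the sum of the squared norms of their projections to `Wᗮ`, which is
`corank W`. -/
lemma corank_le_card_mul {n r : ℕ} (v : Fin n → EuclideanSpace ℝ (Fin r)) (K : ℝ)
    (hK : ∀ i, ‖v i‖ ^ 2 ≤ K) (hv : ∀ x, ∑ i, (inner ℝ x (v i)) ^ 2 = ‖x‖ ^ 2)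
    (W : Submodule ℝ (EuclideanSpace ℝ (Fin r))) :
    corank W ≤ ∑ i, if v i ∈ W then 0 else K := by
  let e := stdOrthonormalBasis ℝ Wᗮ
  have hon : Orthonormal ℝ (fun k => ((e k : Wᗮ) : EuclideanSpace ℝ (Fin r))) :=
    e.orthonormal.comp_linearIsometry Wᗮ.subtypeₗᵢ
  have h1 : corank W = ∑ i, ∑ k, (inner ℝ ((e k : Wᗮ) : EuclideanSpace ℝ (Fin r)) (v i)) ^ 2 := by
    rw [Finset.sum_comm, corank_eq_finrank_orthogonal]
    simp only [hv]
    have : ∀ k, ‖((e k : Wᗮ) : EuclideanSpace ℝ (Fin r))‖ = 1 := hon.1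
    simp [this]
  rw [h1]
  refine Finset.sum_le_sum fun i _ => ?_
  split_ifs with hi
  · refine le_of_eq (Finset.sum_eq_zero fun k _ => ?_)
    rw [Submodule.inner_left_of_mem_orthogonal hi (e k).2]; simp
  · refine le_trans ?_ (hK i)
    have := hon.sum_inner_products_le (v i) (s := Finset.univ)
    simpa using this

lemma corank_sup_le {r : ℕ} (W : Submodule ℝ (EuclideanSpace ℝ (Fin r)))
    (x : EuclideanSpace ℝ (Fin r)) (hx : x ∉ W) :
    corank (Submodule.span ℝ {x} ⊔ W) ≤ corank W - 1 := by
  have hlt : W < Submodule.span ℝ {x} ⊔ W := by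
    refine lt_of_le_of_ne le_sup_right fun h => hx ?_
    rw [h]
    exact Submodule.mem_sup_left (Submodule.mem_span_singleton_self x)
  have h := Submodule.finrank_lt_finrank_of_lt hlt
  have h' : (Module.finrank ℝ W : ℝ) + 1 ≤
      Module.finrank ℝ (Submodule.span ℝ {x} ⊔ W : Submodule ℝ _) := by exact_mod_cast h
  unfold corank
  linarith

lemma corank_sup_le' {r : ℕ} (W : Submodule ℝ (EuclideanSpace ℝ (Fin r)))
    (x : EuclideanSpace ℝ (Fin r)) :
    corank (Submodule.span ℝ {x} ⊔ W) ≤ corank W := by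
  have h := Submodule.finrank_mono (le_sup_right : W ≤ Submodule.span ℝ {x} ⊔ W)
  have h' : (Module.finrank ℝ W : ℝ) ≤
      Module.finrank ℝ (Submodule.span ℝ {x} ⊔ W : Submodule ℝ _) := by exact_mod_cast h
  unfold corank
  linarith

/-- Adjoining one random vector contracts the expected corank by the factor `1 - a / K`, which is
replaced by `exp (-(a / K))` so that its nonnegativity comes for free. -/
lemma corank_step {n r : ℕ} (v : Fin n → EuclideanSpace ℝ (Fin r)) (K a : ℝ) (hK0 : 0 < K)
    (ha : 0 ≤ a) (hK : ∀ i, ‖v i‖ ^ 2 ≤ K) (hv : ∀ x, ∑ i, (inner ℝ x (v i)) ^ 2 = ‖x‖ ^ 2)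
    (p : Fin n → ℝ) (hpa : ∀ i, a ≤ p i) (hp1 : ∑ i, p i = 1)
    (W : Submodule ℝ (EuclideanSpace ℝ (Fin r))) :
    ∑ i, p i * corank (Submodule.span ℝ {v i} ⊔ W) ≤ Real.exp (-(a / K)) * corank W := by
  classical
  have h1 : ∑ i, p i * corank (Submodule.span ℝ {v i} ⊔ W) ≤
      ∑ i, (p i * corank W - a / K * (if v i ∈ W then 0 else K)) := by
    refine Finset.sum_le_sum fun i _ => ?_
    have hpi : 0 ≤ p i := ha.trans (hpa i)
    split_ifs with hi
    · have := mul_le_mul_of_nonneg_left (corank_sup_le' W (v i)) hpi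
      linarith
    · have := mul_le_mul_of_nonneg_left (corank_sup_le W (v i) hi) hpi
      have h2 : a / K * K = a := by field_simp
      rw [h2]
      linarith [hpa i]
  rw [Finset.sum_sub_distrib, ← Finset.sum_mul, hp1, ← Finset.mul_sum] at h1
  have h2 := mul_le_mul_of_nonneg_left (corank_le_card_mul v K hK hv W)
    (div_nonneg ha hK0.le)
  have h3 := mul_le_mul_of_nonneg_right (Real.add_one_le_exp (-(a / K))) (corank_nonneg W)
  linarith

/-- Induction on `d`, splitting off the first sample and averaging over it with `corank_step`
conditionally on the others. -/
lemma expected_corank_le {n r : ℕ} (v : Fin n → EuclideanSpace ℝ (Fin r)) (K a : ℝ) (hK0 : 0 < K)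
    (ha : 0 ≤ a) (hK : ∀ i, ‖v i‖ ^ 2 ≤ K) (hv : ∀ x, ∑ i, (inner ℝ x (v i)) ^ 2 = ‖x‖ ^ 2)
    (p : Fin n → ℝ) (hpa : ∀ i, a ≤ p i) (hp1 : ∑ i, p i = 1) (d : ℕ) :
    ∑ c : Fin d → Fin n, (∏ j, p (c j)) * corank (Submodule.span ℝ (Set.range (v ∘ c))) ≤
      Real.exp (-(a / K)) ^ d * r := by
  induction d with
  | zero => simp [corank]
  | succ d ih =>
    rw [← (Fin.consEquiv fun _ : Fin (d + 1) => Fin n).sum_comp, Fintype.sum_prod_type,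
      Finset.sum_comm]
    have h : ∀ c : Fin d → Fin n, ∑ i, (∏ j, p ((Fin.consEquiv fun _ : Fin (d + 1) => Fin n)
        (i, c) j)) * corank (Submodule.span ℝ (Set.range
          (v ∘ (Fin.consEquiv fun _ : Fin (d + 1) => Fin n) (i, c)))) ≤
        Real.exp (-(a / K)) *
          ((∏ j, p (c j)) * corank (Submodule.span ℝ (Set.range (v ∘ c)))) := by
      intro c
      have hnn : 0 ≤ ∏ j, p (c j) := Finset.prod_nonneg fun j _ => ha.trans (hpa _)
      have h1 := mul_le_mul_of_nonneg_left
        (corank_step v K a hK0 ha hK hv p hpa hp1 (Submodule.span ℝ (Set.range (v ∘ c)))) hnn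
      rw [Finset.mul_sum] at h1
      calc _ = _ := Finset.sum_congr rfl fun i _ => ?_
        _ ≤ _ := h1
        _ = _ := by ring
      have h2 : v ∘ (Fin.consEquiv fun _ : Fin (d + 1) => Fin n) (i, c) =
          Fin.cons (v i) (v ∘ c) := by
        funext j
        refine Fin.cases ?_ (fun j => ?_) j <;> simp [Fin.consEquiv]
      rw [h2, Fin.range_cons, Submodule.span_insert, Fin.prod_univ_succ]
      simp [Fin.consEquiv]
      ring
    refine (Finset.sum_le_sum fun c _ => h c).trans ?_
    rw [← Finset.mul_sum, pow_succ', mul_assoc]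
    exact mul_le_mul_of_nonneg_left ih (Real.exp_pos _).le

/-! ### The sampling distribution -/

lemma isProbabilityMeasure_discMeasure {n : ℕ} (p : Fin n → ℝ) (hp : ∀ i, 0 < p i)
    (hp1 : ∑ i, p i = 1) : IsProbabilityMeasure (discMeasure p) := by
  constructor
  simp only [discMeasure, Measure.coe_finsetSum, Finset.sum_apply, Measure.smul_apply,
    measure_univ, smul_eq_mul, mul_one]
  rw [← ENNReal.ofReal_sum_of_nonneg fun i _ => (hp i).le, hp1, ENNReal.ofReal_one]

lemma discMeasure_singleton {n : ℕ} (p : Fin n → ℝ) (i : Fin n) :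
    discMeasure p {i} = ENNReal.ofReal (p i) := by
  simp only [discMeasure, Measure.coe_finsetSum, Finset.sum_apply, Measure.smul_apply,
    smul_eq_mul]
  rw [Finset.sum_eq_single i] <;> simp +contextual

/-- Markov's inequality for a nonnegative function that is at least `1` on a set `s` of samples. -/
lemma pi_discMeasure_le {n d : ℕ} (p : Fin n → ℝ) (hp : ∀ i, 0 < p i) (hp1 : ∑ i, p i = 1)
    (s : Set (Fin d → Fin n)) (f : (Fin d → Fin n) → ℝ) (hf : ∀ c, 0 ≤ f c)
    (hs : ∀ c ∈ s, 1 ≤ f c) :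
    (Measure.pi fun _ : Fin d => discMeasure p) s ≤
      ENNReal.ofReal (∑ c, (∏ j, p (c j)) * f c) := by
  classical
  have := isProbabilityMeasure_discMeasure p hp hp1
  have hnn : ∀ c : Fin d → Fin n, 0 ≤ ∏ j, p (c j) :=
    fun c => Finset.prod_nonneg fun j _ => (hp _).le
  have hs' : s = ((Finset.univ.filter (· ∈ s) : Finset (Fin d → Fin n)) : Set _) := by simp
  rw [hs', ← sum_measure_singleton]
  simp only [Measure.pi_singleton, discMeasure_singleton]
  have h : ∀ c : Fin d → Fin n, ∏ j, ENNReal.ofReal (p (c j)) = ENNReal.ofReal (∏ j, p (c j)) :=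
    fun c => (ENNReal.ofReal_prod_of_nonneg fun j _ => (hp _).le).symm
  simp only [h]
  rw [← ENNReal.ofReal_sum_of_nonneg fun c _ => hnn c]
  refine ENNReal.ofReal_le_ofReal ?_
  rw [Finset.sum_filter]
  refine Finset.sum_le_sum fun c _ => ?_
  split_ifs with hc
  · exact le_mul_of_one_le_right (hnn c) (hs c hc)
  · exact mul_nonneg (hnn c) (hf c)

/-! ### Singular vectors and the rank of a sample -/

lemma transpose_mul_self_of_isTopSVD {m n r : ℕ} {M : Matrix (Fin m) (Fin n) ℝ}
    {U : Matrix (Fin m) (Fin r) ℝ} {V : Matrix (Fin n) (Fin r) ℝ} (h : IsTopSVD M U V) :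
    Vᵀ * V = 1 := by
  obtain ⟨hkm, hkn, Uf, Vf, σ, hU, hV, hσ, hσ0, hM, hU', hV'⟩ := h
  rw [hV', transpose_submatrix, ← submatrix_mul _ _ _ id _ Function.bijective_id, hV]
  exact submatrix_one _ (Fin.castLE_injective hkn)

/-- If `rank M = r`, the singular values beyond the `r`-th vanish, so `M` factors through the top
`r` right singular vectors. -/
lemma exists_factor {m n r : ℕ} {M : Matrix (Fin m) (Fin n) ℝ} (hrank : M.rank = r)
    {U : Matrix (Fin m) (Fin r) ℝ} {V : Matrix (Fin n) (Fin r) ℝ} (h : IsTopSVD M U V) :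
    ∃ B : Matrix (Fin m) (Fin r) ℝ, M = B * Vᵀ := by
  obtain ⟨hkm, hkn, Uf, Vf, σ, hU, hV, hσ, hσ0, hM, hU', hV'⟩ := h
  set S : Matrix (Fin m) (Fin n) ℝ := Matrix.of fun (i : Fin m) (j : Fin n) =>
    if h : (i : ℕ) = (j : ℕ) ∧ (i : ℕ) < min m n then σ ⟨i, h.2⟩ else 0 with hS
  have hVVt : Vf * Vfᵀ = 1 := mul_eq_one_comm.mp hV
  have hrS : S.rank ≤ r := by
    have : S = Ufᵀ * M * Vf := by
      rw [hM, ← Matrix.mul_assoc, ← Matrix.mul_assoc, hU, Matrix.one_mul, Matrix.mul_assoc, hV,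
        Matrix.mul_one]
    rw [this, ← hrank]
    exact (rank_mul_le_left _ _).trans (rank_mul_le_right _ _)
  have hz : ∀ k : Fin (min m n), r ≤ (k : ℕ) → σ k = 0 := by
    intro k hk
    by_contra hne
    have hpos : 0 < σ k := lt_of_le_of_ne (hσ0 k) (Ne.symm hne)
    have hkm' : (k : ℕ) + 1 ≤ m := by have := k.2; omega
    have hkn' : (k : ℕ) + 1 ≤ n := by have := k.2; omega
    -- The leading principal block of size `k + 1 > r` is diagonal with positive entries.
    have hsub : S.submatrix (Fin.castLE hkm') (Fin.castLE hkn') =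
        Matrix.diagonal fun i : Fin ((k : ℕ) + 1) => σ ⟨i, by have := k.2; omega⟩ := by
      ext i j
      by_cases hij : i = j
      · subst hij
        have : (i : ℕ) < m ∧ (i : ℕ) < n := by omega
        simp [hS, this]
      · have : (i : ℕ) ≠ j := fun h => hij (Fin.ext h)
        simp [hS, hij, this]
    have hr1 : (S.submatrix (Fin.castLE hkm') (Fin.castLE hkn')).rank = k + 1 := by
      rw [hsub, rank_of_isUnit _ ?_, Fintype.card_fin]
      rw [isUnit_iff_isUnit_det, det_diagonal, isUnit_iff_ne_zero]
      refine Finset.prod_ne_zero_iff.mpr fun i _ => ne_of_gt (hpos.trans_le (hσ _ _ ?_))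
      exact Fin.mk_le_of_le_val (by omega)
    have hle := rank_submatrix_le S (Fin.castLE hkm') (Fin.castLE hkn')
    omega
  refine ⟨Uf * S.submatrix id (Fin.castLE hkn), ?_⟩
  rw [hM, Matrix.mul_assoc, Matrix.mul_assoc]
  congr 1
  ext i j
  rw [hV', transpose_submatrix]
  simp only [mul_apply, submatrix_apply, id]
  symm
  refine Finset.sum_of_injOn (Fin.castLE hkn) (Fin.castLE_injective hkn).injOn (by simp) ?_ ?_
  · intro l _ hl
    have hl' : r ≤ (l : ℕ) := by
      by_contra hlt
      exact hl ⟨⟨l, by omega⟩, by simp, rfl⟩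
    have : S i l = 0 := by
      simp only [hS, of_apply]
      split_ifs with h
      · exact hz _ (by simpa using h.1 ▸ hl')
      · rfl
    rw [this, zero_mul]
  · intro l _; rfl

/-- If the sampled rows of `V` span `ℝ^r`, the sampled columns of `M = B Vᵀ` have the same span as
the columns of `B`; the rescaling factors are nonzero and do not affect the rank. -/
lemma rank_sampleA {m n r d : ℕ} {M : Matrix (Fin m) (Fin n) ℝ} (hrank : M.rank = r)
    {B : Matrix (Fin m) (Fin r) ℝ} {V : Matrix (Fin n) (Fin r) ℝ} (hB : M = B * Vᵀ)
    (p : Fin n → ℝ) (hp : ∀ i, 0 < p i) (c : Fin d → Fin n)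
    (hc : Submodule.span ℝ (Set.range ((fun i => WithLp.toLp 2 (V i)) ∘ c)) = ⊤) :
    (sampleA d M p c).rank = r := by
  have hA : sampleA d M p c =
      (B * (V.submatrix c id)ᵀ) * diagonal fun j => (Real.sqrt (d * p (c j)))⁻¹ := by
    ext i j
    rw [mul_diagonal, sampleA, of_apply, hB, div_eq_mul_inv]
    rfl
  have hunit : IsUnit (diagonal fun j => (Real.sqrt (d * p (c j)))⁻¹).det := by
    rw [det_diagonal, isUnit_iff_ne_zero]
    refine Finset.prod_ne_zero_iff.mpr fun j _ => inv_ne_zero (Real.sqrt_ne_zero'.mpr ?_)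
    have : 0 < d := j.pos
    have := hp (c j)
    positivity
  rw [hA, rank_mul_eq_left_of_isUnit_det _ _ hunit]
  have hBr : B.rank = r := by
    refine le_antisymm (by simpa using B.rank_le_width) ?_
    calc r = M.rank := hrank.symm
      _ ≤ B.rank := by rw [hB]; exact rank_mul_le_left _ _
  have hsurj : LinearMap.range (V.submatrix c id)ᵀ.mulVecLin = ⊤ := by
    rw [range_mulVecLin]
    have := congrArg (Submodule.map (WithLp.linearEquiv 2 ℝ (Fin r → ℝ)).toLinearMap) hc
    rw [Submodule.map_span, Submodule.map_top, LinearEquiv.range, ← Set.range_comp] at this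
    exact this
  rw [Matrix.rank, mulVecLin_mul, LinearMap.range_comp_of_range_eq_top _ hsurj]
  exact hBr

lemma rowNormSq_le_incoh {m n r : ℕ} (hr : 0 < r) (U : Matrix (Fin m) (Fin r) ℝ)
    (V : Matrix (Fin n) (Fin r) ℝ) (i : Fin n) : rowNormSq V i ≤ incoh U V * r / n := by
  have hn : 0 < (n : ℝ) := by exact_mod_cast i.pos
  have hr' : 0 < (r : ℝ) := by exact_mod_cast hr
  have h : (n : ℝ) / r * rowNormSq V i ≤ incoh U V :=
    (le_ciSup (f := fun i => (n : ℝ) / r * rowNormSq V i)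
      (Set.finite_range _).bddAbove i).trans (le_max_right _ _)
  rw [le_div_iff₀ hn]
  calc rowNormSq V i * n = (n : ℝ) / r * rowNormSq V i * r := by field_simp
    _ ≤ _ := mul_le_mul_of_nonneg_right h hr'.le

/-! ### The success probability -/

/-- Lemma 1: if `rank(M) = r` and `d ≥ 7μ(r)r(t + ln r)/(n p_min)`, then with
probability at least `1 - e^{-t}` the sampled rescaled column matrix `A` has rank `r`. -/
theorem statement3 {m n r d : ℕ} (hmn : m ≤ n)
    (M : Matrix (Fin m) (Fin n) ℝ) (hrank : M.rank = r)
    (p : Fin n → ℝ) (hp : ∀ i, 0 < p i) (hp1 : ∑ i, p i = 1)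
    (Ubar : Matrix (Fin m) (Fin r) ℝ) (Vbar : Matrix (Fin n) (Fin r) ℝ)
    (hsvd : IsTopSVD M Ubar Vbar)
    (t : ℝ)
    (hd : 7 * incoh Ubar Vbar * r * (t + Real.log r) / ((n : ℝ) * ⨅ i, p i) ≤ (d : ℝ)) :
    1 - ENNReal.ofReal (Real.exp (-t)) ≤
      (Measure.pi fun _ : Fin d => discMeasure p) {c | (sampleA d M p c).rank = r} := by
  classical
  have := isProbabilityMeasure_discMeasure p hp hp1
  obtain ⟨B, hB⟩ := exists_factor hrank hsvd
  rcases Nat.eq_zero_or_pos r with hr | hr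
  · -- A matrix of rank `0` vanishes, and so does every sample of its columns.
    subst hr
    have hM : M = 0 := by ext i j; simp [hB]
    have : {c | (sampleA d M p c).rank = 0} = Set.univ := by
      refine Set.eq_univ_of_forall fun c => ?_
      have : sampleA d M p c = 0 := by ext i j; simp [sampleA, hM]
      simp [this]
    rw [this, measure_univ]
    exact tsub_le_self
  have hVV := transpose_mul_self_of_isTopSVD hsvd
  have hr' : 0 < (r : ℝ) := by exact_mod_cast hr
  have hn0 : 0 < n := hr.trans_le hsvd.2.1
  have hn : 0 < (n : ℝ) := by exact_mod_cast hn0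
  have : Nonempty (Fin n) := ⟨⟨0, hn0⟩⟩
  set a := ⨅ i, p i with ha_def
  have ha : 0 < a := by
    obtain ⟨i, hi⟩ := exists_eq_ciInf_of_finite (f := p)
    rw [ha_def, ← hi]; exact hp i
  have hpa : ∀ i, a ≤ p i := fun i => ciInf_le (Set.finite_range p).bddBelow i
  set K := incoh Ubar Vbar * r / n with hK_def
  set v : Fin n → EuclideanSpace ℝ (Fin r) := fun i => WithLp.toLp 2 (Vbar i) with hv_def
  have hvK : ∀ i, ‖v i‖ ^ 2 ≤ K := by
    intro i
    rw [EuclideanSpace.real_norm_sq_eq]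
    exact rowNormSq_le_incoh hr Ubar Vbar i
  have hpars : ∀ x, ∑ i, (inner ℝ x (v i)) ^ 2 = ‖x‖ ^ 2 := by
    intro x
    have h1 : ∀ i, inner ℝ x (v i) = (Vbar *ᵥ x.ofLp) i := by
      intro i
      simp [hv_def, PiLp.inner_apply, mulVec, dotProduct]
    have h2 : (Vbar *ᵥ x.ofLp) ⬝ᵥ (Vbar *ᵥ x.ofLp) = x.ofLp ⬝ᵥ x.ofLp := by
      rw [dotProduct_mulVec, vecMul_mulVec, hVV, dotProduct_comm]; simp
    rw [EuclideanSpace.real_norm_sq_eq]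
    simpa [h1, dotProduct, sq] using h2
  -- A unit vector has a nonzero coefficient against some `v i`, which forces `K > 0`.
  have hK0 : 0 < K := by
    by_contra hK
    have hv0 : ∀ i, v i = 0 := fun i => by
      have h1 := (hvK i).trans (not_lt.mp hK)
      have h2 := sq_nonneg ‖v i‖
      simpa using le_antisymm h1 h2
    have := hpars (EuclideanSpace.single ⟨0, hr⟩ 1)
    simp [hv0] at this
  have hbad := pi_discMeasure_le p hp hp1 (d := d) {c | (sampleA d M p c).rank = r}ᶜ
    (fun c => corank (Submodule.span ℝ (Set.range (v ∘ c)))) (fun c => corank_nonneg _) (by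
      intro c hc
      have hlt : Module.finrank ℝ (Submodule.span ℝ (Set.range (v ∘ c))) < r := by
        by_contra hge
        refine hc (rank_sampleA hrank hB p hp c ?_)
        refine Submodule.eq_top_of_finrank_eq (le_antisymm (Submodule.finrank_le _) ?_)
        rw [finrank_euclideanSpace_fin]
        exact not_lt.mp hge
      have : (Module.finrank ℝ (Submodule.span ℝ (Set.range (v ∘ c))) : ℝ) + 1 ≤ r := by
        exact_mod_cast hlt
      unfold corank
      linarith)
  have hexp := expected_corank_le v K a hK0 ha.le hvK hpars p hpa hp1 d
  -- For `t + ln r < 0` the claim is vacuous, since `e^{-t} > r ≥ 1`.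
  rcases lt_or_ge (t + Real.log r) 0 with hneg | hnn
  · have h1 : (1 : ℝ) ≤ r := by exact_mod_cast hr
    have h2 : 1 ≤ ENNReal.ofReal (Real.exp (-t)) := by
      rw [ENNReal.one_le_ofReal]
      exact Real.one_le_exp (by linarith [Real.log_nonneg h1])
    rw [tsub_eq_zero_of_le h2]
    exact bot_le
  have hfinal : Real.exp (-(a / K)) ^ d * r ≤ Real.exp (-t) := by
    have h1 : t + Real.log r ≤ a / K * d := by
      have h2 : 7 * incoh Ubar Vbar * r * (t + Real.log r) / (n * a) =
          7 * (K / a * (t + Real.log r)) := by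
        rw [hK_def]; field_simp
      have h3 : 0 ≤ K / a * (t + Real.log r) := by positivity
      have h4 : K / a * (t + Real.log r) ≤ d := by linarith
      calc t + Real.log r = a / K * (K / a * (t + Real.log r)) := by field_simp
        _ ≤ _ := mul_le_mul_of_nonneg_left h4 (by positivity)
    rw [← Real.exp_nat_mul]
    calc Real.exp (d * -(a / K)) * r = Real.exp (d * -(a / K) + Real.log r) := by
          rw [Real.exp_add, Real.exp_log hr']
      _ ≤ Real.exp (-t) := Real.exp_le_exp.mpr (by linarith)
  have hb := hbad.trans (ENNReal.ofReal_le_ofReal (hexp.trans hfinal))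
  have hcompl := prob_compl_eq_one_sub (μ := Measure.pi fun _ : Fin d => discMeasure p)
    (s := {c | (sampleA d M p c).rank = r}ᶜ) (Set.toFinite _).measurableSet
  rw [compl_compl] at hcompl
  rw [hcompl]
  exact tsub_le_tsub_left hb 1
end

section
/- Assume M = C + R where rank(C) = r and the entries of R ∈ ℝ^{m×n} are i.i.d. N(0, σ²). Suppose r ≤ d ≤ m/4 and ln(2n/δ) ≤ m/64, and let Û ∈ ℝ^{m×r̂} (r̂ = min(r, rank(A))) consist of the top-r̂ left singular vectors of the matrix A formed from d uniformly sampled and rescaled columns of M. Then there is a universal constant c > 0 such that, with probability at least 1 − δ, μ̂(r̂) ≤ c · r μ(r) ln(m/δ) / r̂. -/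
/-! Fix the sampled columns: `A = (C + R) S` for a fixed matrix `S` (`sampleA_eq_mul`), so only the noise
`R` is random; independence of the sample then gives the result for a random sample as well
(`one_sub_le_prod`).

Let `U` consist of the top `k = r̂` left singular vectors of `A`. The norm of its `i`-th row is
`‖Uᵀ e_i‖`. Split `e_i` into its component in the column space of `C` and the component `e` orthogonal
to it (`tailVec`). Since `‖Uᵀ x‖ ≤ ‖x‖`, the first contributes at most the squared norm of row `i` of
`Ū`, which is at most `r μ / m`; see `rowNormSq_le_add`. It remains to bound `‖Uᵀ e‖²` by a constant
times `r ln(m/δ) / m`.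

The law of `R` is invariant under orthogonal maps (`gaussMeasure_map_orthogonal`). Those fixing the
column space of `C` carry `(C + R) S` to `(C + O R) S = O (C + R) S` and hence `U` to `O U`. Averaging
over the Householder reflections that send `e` to the direction of a Gaussian vector `y` in the
orthogonal complement of the column space, one may, by Tonelli, fix `R` and let `y` be random. Then
`‖Uᵀ e‖²` becomes at most `‖U₀ᵀ y‖² / ‖y‖²` with `U₀` fixed: the denominator is at least `m / 4` by a
chi-square tail bound, and the numerator is a sum of `k` squares controlled by Gaussian tails
(`gaussMeasure_badEvent_le`). A union bound over `k ≤ r` and over the `m` rows finishes the argument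
(`union_bound_le`). Taking the union over `k` avoids conditioning on the rank of `A`.

That `U₀` does not depend on `y` requires the top-`k` left singular subspace of `(C + R) S` to be
unique for almost every `R` (`ae_unique_proj`). The distance of `(C + R) S` to the matrices of rank at
most `k` is Lipschitz in `R`, hence differentiable almost everywhere by Rademacher's theorem, and its
derivative determines the subspace.

Top singular vectors enter only through their variational description `IsKyFanTop` (Ky Fan), which is
a closed condition once the coefficients `W` with `U = A W` are adjoined; the bad event is therefore
measurable. If `σ = 0`, every such `U` lies in the column space of `C` and `Uᵀ e = 0`. -/

open MeasureTheory Matrix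

/-! ### Frobenius norm and the variational description of top singular vectors -/

/-- The Frobenius inner product of two matrices. -/
noncomputable def frobInner {a b : ℕ} (X Y : Matrix (Fin a) (Fin b) ℝ) : ℝ :=
  ∑ i, ∑ j, X i j * Y i j

lemma frobInner_eq_trace {a b : ℕ} (X Y : Matrix (Fin a) (Fin b) ℝ) :
    frobInner X Y = (Xᵀ * Y).trace := by
  simp only [frobInner, Matrix.trace, Matrix.diag, Matrix.mul_apply, Matrix.transpose_apply]
  exact Finset.sum_comm

lemma frobSq_eq_frobInner {a b : ℕ} (X : Matrix (Fin a) (Fin b) ℝ) :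
    frobSq X = frobInner X X := by
  simp [frobSq, frobInner, sq]

lemma frobSq_eq_trace {a b : ℕ} (X : Matrix (Fin a) (Fin b) ℝ) :
    frobSq X = (Xᵀ * X).trace := by
  rw [frobSq_eq_frobInner, frobInner_eq_trace]

lemma frobSq_eq_trace' {a b : ℕ} (X : Matrix (Fin a) (Fin b) ℝ) :
    frobSq X = (X * Xᵀ).trace := by
  rw [frobSq_eq_trace, Matrix.trace_mul_comm]

lemma frobSq_nonneg {a b : ℕ} (X : Matrix (Fin a) (Fin b) ℝ) : 0 ≤ frobSq X :=
  Finset.sum_nonneg fun _ _ => Finset.sum_nonneg fun _ _ => sq_nonneg _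

lemma eq_zero_of_frobSq_eq_zero {a b : ℕ} {X : Matrix (Fin a) (Fin b) ℝ} (h : frobSq X = 0) :
    X = 0 := by
  ext i j
  have h1 := (Finset.sum_eq_zero_iff_of_nonneg
    (fun i _ => Finset.sum_nonneg fun j _ => sq_nonneg (X i j))).1 h i (Finset.mem_univ i)
  have h2 := (Finset.sum_eq_zero_iff_of_nonneg
    (fun j _ => sq_nonneg (X i j))).1 h1 j (Finset.mem_univ j)
  simpa using h2

lemma frobSq_add_smul {a b : ℕ} (X Y : Matrix (Fin a) (Fin b) ℝ) (t : ℝ) :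
    frobSq (X + t • Y) = frobSq X + 2 * t * frobInner X Y + t ^ 2 * frobSq Y := by
  simp only [frobSq, frobInner, Matrix.add_apply, Matrix.smul_apply, smul_eq_mul, Finset.mul_sum,
    ← Finset.sum_add_distrib]
  exact Finset.sum_congr rfl fun i _ => Finset.sum_congr rfl fun j _ => by ring

/-- The columns of `U` are orthonormal, lie in the column space of `A`, and span a subspace that
captures as much of the Frobenius mass of `A` as any `k`-dimensional subspace does. This is the
variational description of a matrix of top-`k` left singular vectors of `A` with nonzero singular
values. -/
def IsKyFanTop {m d k : ℕ} (A : Matrix (Fin m) (Fin d) ℝ) (U : Matrix (Fin m) (Fin k) ℝ) : Prop :=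
  Uᵀ * U = 1 ∧ (∃ W : Matrix (Fin d) (Fin k) ℝ, U = A * W) ∧
    ∀ U' : Matrix (Fin m) (Fin k) ℝ, U'ᵀ * U' = 1 → frobSq (U'ᵀ * A) ≤ frobSq (Uᵀ * A)

lemma IsKyFanTop.orthogonal_mul {m d k : ℕ} {A : Matrix (Fin m) (Fin d) ℝ}
    {U : Matrix (Fin m) (Fin k) ℝ} (h : IsKyFanTop A U) {O : Matrix (Fin m) (Fin m) ℝ}
    (hO : Oᵀ * O = 1) : IsKyFanTop (O * A) (O * U) := by
  obtain ⟨h1, ⟨W, hW⟩, h3⟩ := h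
  have hO' : O * Oᵀ = 1 := mul_eq_one_comm.1 hO
  refine ⟨?_, ⟨W, by rw [hW, Matrix.mul_assoc]⟩, fun U' hU' => ?_⟩
  · rw [Matrix.transpose_mul, Matrix.mul_assoc, ← Matrix.mul_assoc Oᵀ, hO, Matrix.one_mul, h1]
  · have := h3 (Oᵀ * U') (by
      rw [Matrix.transpose_mul, Matrix.transpose_transpose, Matrix.mul_assoc, ← Matrix.mul_assoc O,
        hO', Matrix.one_mul, hU'])
    rw [Matrix.transpose_mul, Matrix.transpose_transpose, Matrix.mul_assoc] at this
    rwa [Matrix.transpose_mul O U, Matrix.mul_assoc Uᵀ, ← Matrix.mul_assoc Oᵀ, hO, Matrix.one_mul]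

/-- Pythagoras for the orthogonal projection `U Uᵀ`. -/
lemma frobSq_sub_proj {m d k : ℕ} (A : Matrix (Fin m) (Fin d) ℝ)
    {U : Matrix (Fin m) (Fin k) ℝ} (hU : Uᵀ * U = 1) :
    frobSq (A - U * (Uᵀ * A)) = frobSq A - frobSq (Uᵀ * A) := by
  rw [frobSq_eq_trace, frobSq_eq_trace A, frobSq_eq_trace (Uᵀ * A), ← Matrix.trace_sub]
  congr 1
  simp only [Matrix.transpose_sub, Matrix.transpose_mul, Matrix.transpose_transpose,
    Matrix.sub_mul, Matrix.mul_sub]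
  have : Aᵀ * U * Uᵀ * (U * (Uᵀ * A)) = Aᵀ * U * (Uᵀ * A) := by
    rw [Matrix.mul_assoc, ← Matrix.mul_assoc Uᵀ, hU, Matrix.one_mul]
  rw [this]
  simp only [Matrix.mul_assoc]
  abel

/-- `U Uᵀ A` is the best approximation of `A` with columns in the span of `U`. -/
lemma frobSq_sub_proj_le {m d k : ℕ} (A : Matrix (Fin m) (Fin d) ℝ)
    {U : Matrix (Fin m) (Fin k) ℝ} (hU : Uᵀ * U = 1) (Y : Matrix (Fin k) (Fin d) ℝ) :
    frobSq (A - U * (Uᵀ * A)) ≤ frobSq (A - U * Y) := by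
  have h1 : frobSq (A - U * Y) = frobSq (A - U * (Uᵀ * A)) + frobSq (Uᵀ * A - Y) := by
    have hB := frobSq_sub_proj (A - U * Y) hU
    have e1 : Uᵀ * (A - U * Y) = Uᵀ * A - Y := by
      rw [Matrix.mul_sub, ← Matrix.mul_assoc, hU, Matrix.one_mul]
    rw [e1] at hB
    have e2 : A - U * Y - U * (Uᵀ * A - Y) = A - U * (Uᵀ * A) := by
      rw [Matrix.mul_sub]; abel
    rw [e2] at hB
    linarith
  rw [h1]
  linarith [frobSq_nonneg (Uᵀ * A - Y)]

/-! ### Almost everywhere uniqueness of the top singular subspace -/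

section Uniqueness

open scoped Matrix.Norms.Frobenius

lemma frobenius_norm_sq {a b : ℕ} (X : Matrix (Fin a) (Fin b) ℝ) : ‖X‖ ^ 2 = frobSq X := by
  rw [Matrix.frobenius_norm_def, ← Real.rpow_natCast, ← Real.rpow_mul (by positivity)]
  simp [frobSq]

/-- The matrices of the form `U Y` with `U` an `m × k` matrix with orthonormal columns. -/
def lowRankSet (m d k : ℕ) : Set (Matrix (Fin m) (Fin d) ℝ) :=
  {X | ∃ (U : Matrix (Fin m) (Fin k) ℝ) (Y : Matrix (Fin k) (Fin d) ℝ), Uᵀ * U = 1 ∧ X = U * Y}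

lemma infDist_sq_le {m d k : ℕ} (A : Matrix (Fin m) (Fin d) ℝ) {U : Matrix (Fin m) (Fin k) ℝ}
    (hU : Uᵀ * U = 1) :
    Metric.infDist A (lowRankSet m d k) ^ 2 ≤ frobSq (A - U * (Uᵀ * A)) := by
  rw [← frobenius_norm_sq, ← dist_eq_norm]
  gcongr
  · exact Metric.infDist_nonneg
  · exact Metric.infDist_le_dist_of_mem ⟨U, _, hU, rfl⟩

lemma infDist_sq_eq {m d k : ℕ} {A : Matrix (Fin m) (Fin d) ℝ} {U : Matrix (Fin m) (Fin k) ℝ}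
    (h : IsKyFanTop A U) :
    Metric.infDist A (lowRankSet m d k) ^ 2 = frobSq (A - U * (Uᵀ * A)) := by
  refine le_antisymm (infDist_sq_le A h.1) ?_
  rw [← frobenius_norm_sq]
  gcongr
  rw [Metric.le_infDist (s := lowRankSet m d k) ⟨U * (Uᵀ * A), U, Uᵀ * A, h.1, rfl⟩]
  rintro _ ⟨U', Y, hU', rfl⟩
  rw [dist_eq_norm]
  refine (sq_le_sq₀ (norm_nonneg _) (norm_nonneg _)).1 ?_
  rw [frobenius_norm_sq, frobenius_norm_sq]
  refine le_trans ?_ (frobSq_sub_proj_le A hU' Y)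
  rw [frobSq_sub_proj A h.1, frobSq_sub_proj A hU']
  linarith [h.2.2 U' hU']

/-- The derivative of the squared distance to the low rank matrices along a line, read off from
any maximiser `U`: the quadratic polynomial
`t ↦ ‖(1 - U Uᵀ)(A + t H)‖²` touches it from above at `0`, so the two have the same derivative
there. -/
lemma deriv_infDist_sq_eq {m d k : ℕ} {A H : Matrix (Fin m) (Fin d) ℝ}
    {U : Matrix (Fin m) (Fin k) ℝ} (h : IsKyFanTop A U) {D : ℝ}
    (hD : HasDerivAt (fun t : ℝ => Metric.infDist (A + t • H) (lowRankSet m d k) ^ 2) D 0) :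
    2 * frobInner (A - U * (Uᵀ * A)) (H - U * (Uᵀ * H)) = D := by
  set X := A - U * (Uᵀ * A)
  set Y := H - U * (Uᵀ * H)
  have hq : ∀ t : ℝ, frobSq ((A + t • H) - U * (Uᵀ * (A + t • H)))
      = frobSq X + 2 * t * frobInner X Y + t ^ 2 * frobSq Y := by
    intro t
    rw [← frobSq_add_smul]
    congr 1
    simp only [X, Y, Matrix.mul_add, Matrix.mul_smul, smul_sub]
    abel
  have hqd : HasDerivAt (fun t : ℝ => frobSq X + 2 * t * frobInner X Y + t ^ 2 * frobSq Y)
      (2 * frobInner X Y) 0 := by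
    have h1 := ((((hasDerivAt_id (0 : ℝ)).const_mul 2).mul_const (frobInner X Y)).const_add
      (frobSq X)).add (((hasDerivAt_id (0 : ℝ)).pow 2).mul_const (frobSq Y))
    exact h1.congr_deriv (by simp)
  have hsub := hqd.sub hD
  have hmin : IsLocalMin ((fun t : ℝ => frobSq X + 2 * t * frobInner X Y + t ^ 2 * frobSq Y) -
      fun t : ℝ => Metric.infDist (A + t • H) (lowRankSet m d k) ^ 2) 0 := by
    refine Filter.Eventually.of_forall fun t => ?_
    have h0 : Metric.infDist A (lowRankSet m d k) ^ 2 = frobSq X := infDist_sq_eq h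
    have ht := infDist_sq_le (A + t • H) h.1
    rw [hq] at ht
    simp only [Pi.sub_apply, zero_smul, add_zero, h0]
    linarith
  have := hmin.hasDerivAt_eq_zero hsub
  linarith

lemma exists_lipschitzWith_linearMap {E F : Type*} [NormedAddCommGroup E] [NormedSpace ℝ E]
    [FiniteDimensional ℝ E] [NormedAddCommGroup F] [NormedSpace ℝ F] (T : E →ₗ[ℝ] F) :
    ∃ K, LipschitzWith K T :=
  ⟨_, (LinearMap.toContinuousLinearMap T).lipschitz⟩

/-- The projection onto the span of the top singular vectors is unique at every point at which the
distance to the low rank matrices is differentiable, so by Rademacher's theorem almost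
everywhere. Two maximisers give the same directional derivatives, whence `(U Uᵀ - U' U'ᵀ) A = 0`,
and the columns of `U` and `U'` lie in the column space of `A`. -/
lemma ae_unique_proj {m n d : ℕ} (k : ℕ) (C : Matrix (Fin m) (Fin n) ℝ)
    (S : Matrix (Fin n) (Fin d) ℝ) :
    ∀ᵐ R : Fin m → Fin n → ℝ, ∀ U U' : Matrix (Fin m) (Fin k) ℝ,
      IsKyFanTop (addNoise C R * S) U → IsKyFanTop (addNoise C R * S) U' →
        U * Uᵀ = U' * U'ᵀ := by
  let L : (Fin m → Fin n → ℝ) →ₗ[ℝ] Matrix (Fin m) (Fin d) ℝ :=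
    { toFun := fun R => Matrix.of R * S
      map_add' := fun x y => by rw [← Matrix.of_add_of, Matrix.add_mul]
      map_smul' := fun t x => by rw [← Matrix.smul_of, Matrix.smul_mul]; rfl }
  obtain ⟨K, hK⟩ := exists_lipschitzWith_linearMap L
  have hLapp : ∀ R, L R = Matrix.of R * S := fun R => rfl
  have hA : ∀ R, addNoise C R * S = C * S + L R := fun R => by
    rw [hLapp, addNoise, Matrix.add_mul]
  have hlip : LipschitzWith (1 * K)
      (fun R => Metric.infDist (C * S + L R) (lowRankSet m d k)) := by
    refine (Metric.lipschitz_infDist_pt (lowRankSet m d k)).comp ?_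
    refine LipschitzWith.of_dist_le_mul fun x y => ?_
    rw [dist_add_left]
    exact hK.dist_le_mul x y
  filter_upwards [hlip.ae_differentiableAt (μ := volume)] with R hR U U' hU hU'
  have key : ∀ H : Matrix (Fin m) (Fin n) ℝ, ∃ D, HasDerivAt (fun t : ℝ =>
      Metric.infDist (addNoise C R * S + t • (H * S)) (lowRankSet m d k) ^ 2) D 0 := by
    intro H
    -- Only directions of the form `H S` are reached by perturbing the noise.
    have hline : HasDerivAt (fun t : ℝ => R + t • (fun i j => H i j)) (fun i j => H i j) 0 := by
      have := ((hasDerivAt_id (0 : ℝ)).smul_const (fun i j => H i j)).const_add R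
      simpa using this
    have hR' : HasFDerivAt (fun R => Metric.infDist (C * S + L R) (lowRankSet m d k))
        (fderiv ℝ (fun R => Metric.infDist (C * S + L R) (lowRankSet m d k)) R)
        (R + (0 : ℝ) • (fun i j => H i j)) := by
      rw [zero_smul, add_zero]; exact hR.hasFDerivAt
    have hc := (hR'.comp_hasDerivAt (0 : ℝ) hline).pow 2
    refine ⟨_, hc.congr_of_eventuallyEq (Filter.Eventually.of_forall fun t => ?_)⟩
    simp only [Function.comp, Pi.pow_apply, hA, map_add, map_smul]
    rw [add_assoc, hLapp (fun i j => H i j)]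
    rfl
  set A := addNoise C R * S with hAdef
  have hUP : U * Uᵀ * (U * Uᵀ) = U * Uᵀ := by
    rw [Matrix.mul_assoc, ← Matrix.mul_assoc Uᵀ, hU.1, Matrix.one_mul]
  have hUP' : U' * U'ᵀ * (U' * U'ᵀ) = U' * U'ᵀ := by
    rw [Matrix.mul_assoc, ← Matrix.mul_assoc U'ᵀ, hU'.1, Matrix.one_mul]
  have inner_eq : ∀ (V : Matrix (Fin m) (Fin k) ℝ), Vᵀ * V = 1 →
      ∀ Y : Matrix (Fin m) (Fin d) ℝ,
      frobInner (A - V * (Vᵀ * A)) (Y - V * (Vᵀ * Y)) = (Aᵀ * (Y - V * Vᵀ * Y)).trace := by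
    intro V hV Y
    rw [frobInner_eq_trace]
    congr 1
    simp only [Matrix.transpose_sub, Matrix.transpose_mul, Matrix.transpose_transpose,
      Matrix.sub_mul, Matrix.mul_sub]
    have : Aᵀ * V * Vᵀ * (V * (Vᵀ * Y)) = Aᵀ * V * (Vᵀ * Y) := by
      rw [Matrix.mul_assoc, ← Matrix.mul_assoc Vᵀ, hV, Matrix.one_mul]
    rw [this]
    simp only [Matrix.mul_assoc]
    abel
  set Δ := U * Uᵀ - U' * U'ᵀ with hΔ
  have hΔT : Δᵀ = Δ := by simp [hΔ]
  -- Equal derivatives in the direction `H = Δ A Sᵀ` force `Δ A Sᵀ = 0`.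
  have hzero : Δ * A * Sᵀ = 0 := by
    obtain ⟨D, hD⟩ := key (Δ * A * Sᵀ)
    have e1 := deriv_infDist_sq_eq hU hD
    have e2 := deriv_infDist_sq_eq hU' hD
    rw [inner_eq U hU.1] at e1
    rw [inner_eq U' hU'.1] at e2
    apply eq_zero_of_frobSq_eq_zero
    rw [frobSq_eq_trace']
    have : (Aᵀ * (Δ * A * Sᵀ * S - U' * U'ᵀ * (Δ * A * Sᵀ * S))).trace -
        (Aᵀ * (Δ * A * Sᵀ * S - U * Uᵀ * (Δ * A * Sᵀ * S))).trace = 0 := by linarith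
    rw [← Matrix.trace_sub, ← Matrix.mul_sub, sub_sub_sub_cancel_left, ← Matrix.sub_mul, ← hΔ]
      at this
    rw [← this, Matrix.transpose_mul, Matrix.transpose_mul, Matrix.transpose_transpose, hΔT]
    rw [Matrix.trace_mul_comm (Δ * A * Sᵀ), Matrix.mul_assoc S, Matrix.trace_mul_comm S]
    simp only [Matrix.mul_assoc]
  have hΔA : Δ * A = 0 := by
    have h1 : Δ * addNoise C R * (S * Sᴴ) = 0 := by
      rw [Matrix.conjTranspose_eq_transpose_of_trivial, ← hzero, hAdef]
      simp only [Matrix.mul_assoc]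
    rw [hAdef, ← Matrix.mul_assoc]
    exact (Matrix.mul_self_mul_conjTranspose_eq_zero S _).1 h1
  obtain ⟨W, hW⟩ := hU.2.1
  obtain ⟨W', hW'⟩ := hU'.2.1
  have hΔU : Δ * U = 0 := by rw [hW, ← Matrix.mul_assoc, hΔA, Matrix.zero_mul]
  have hΔU' : Δ * U' = 0 := by rw [hW', ← Matrix.mul_assoc, hΔA, Matrix.zero_mul]
  have hΔΔ : Δ * Δᴴ = 0 := by
    rw [Matrix.conjTranspose_eq_transpose_of_trivial, hΔT]
    nth_rewrite 2 [hΔ]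
    rw [Matrix.mul_sub, ← Matrix.mul_assoc, ← Matrix.mul_assoc, hΔU, hΔU']
    simp
  exact sub_eq_zero.1 (Matrix.self_mul_conjTranspose_eq_zero.1 hΔΔ)

end Uniqueness

/-! ### Singular value decompositions and Ky Fan's inequality -/

section KyFan

/-- The rows of a matrix with orthonormal columns have norm at most one. -/
lemma rowNormSq_le_one {m k : ℕ} {Y : Matrix (Fin m) (Fin k) ℝ} (hY : Yᵀ * Y = 1) (i : Fin m) :
    rowNormSq Y i ≤ 1 := by
  have hP : (Y * Yᵀ) * (Y * Yᵀ) = Y * Yᵀ := by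
    rw [Matrix.mul_assoc, ← Matrix.mul_assoc Yᵀ, hY, Matrix.one_mul]
  have hii : (Y * Yᵀ) i i = rowNormSq Y i := by
    simp [Matrix.mul_apply, rowNormSq, sq]
  have hsymm : ∀ a b, (Y * Yᵀ) a b = (Y * Yᵀ) b a := fun a b => by
    simp [Matrix.mul_apply, mul_comm]
  have h1 : rowNormSq Y i = ∑ j, ((Y * Yᵀ) i j) ^ 2 := by
    rw [← hii, ← hP, Matrix.mul_apply]
    rw [hP]
    exact Finset.sum_congr rfl fun j _ => by rw [hsymm j i, sq]
  have h2 : ((Y * Yᵀ) i i) ^ 2 ≤ ∑ j, ((Y * Yᵀ) i j) ^ 2 :=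
    Finset.single_le_sum (f := fun j => ((Y * Yᵀ) i j) ^ 2) (fun j _ => sq_nonneg _)
      (Finset.mem_univ i)
  rw [hii, ← h1] at h2
  nlinarith

lemma sum_rowNormSq {m k : ℕ} {Y : Matrix (Fin m) (Fin k) ℝ} (hY : Yᵀ * Y = 1) :
    ∑ i, rowNormSq Y i = k := by
  have : ∑ i, rowNormSq Y i = frobSq Y := rfl
  rw [this, frobSq_eq_trace, hY]
  simp

/-- Ky Fan's inequality in weighted form: weights `p ∈ [0, 1]` of total mass `k` put on a
decreasing sequence give at most the sum of its first `k` terms. -/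
lemma sum_mul_le_sum_first {m k : ℕ} (hk : k ≤ m) (s p : Fin m → ℝ) (hs : ∀ i j, i ≤ j → s j ≤ s i)
    (hp1 : ∀ i, p i ≤ 1) (hp0 : ∀ i, 0 ≤ p i) (hp : ∑ i, p i = k) :
    ∑ i, s i * p i ≤ ∑ i, s i * (if (i : ℕ) < k then 1 else 0) := by
  rcases Nat.eq_zero_or_pos k with rfl | hk0
  · have : ∀ i, p i = 0 := fun i =>
      (Finset.sum_eq_zero_iff_of_nonneg (fun i _ => hp0 i)).1 (by simpa using hp) i
        (Finset.mem_univ i)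
    simp [this]
  -- `a` is the last of the first `k` indices; `s a` serves as a threshold.
  let a : Fin m := ⟨k - 1, by omega⟩
  have hcount : ∑ i : Fin m, (if (i : ℕ) < k then (1 : ℝ) else 0) = k := by
    rw [Finset.sum_boole, Fin.card_filter_val_lt, min_eq_right hk]
  have hle : ∀ i : Fin m,
      (s i - s a) * (p i - (if (i : ℕ) < k then 1 else 0)) ≤ 0 := by
    intro i
    split_ifs with h
    · have := hs i a (Fin.le_def.2 (by simp only [a]; omega))
      nlinarith [hp1 i]
    · have := hs a i (Fin.le_def.2 (by simp only [a]; omega))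
      nlinarith [hp0 i]
  have hsum : ∑ i, (s i - s a) * (p i - (if (i : ℕ) < k then 1 else 0)) ≤ 0 :=
    Finset.sum_nonpos fun i _ => hle i
  have hexp : ∑ i, (s i - s a) * (p i - (if (i : ℕ) < k then 1 else 0))
      = (∑ i, s i * p i - ∑ i, s i * (if (i : ℕ) < k then 1 else 0))
        - s a * (∑ i, p i - ∑ i : Fin m, (if (i : ℕ) < k then (1 : ℝ) else 0)) := by
    simp only [Finset.mul_sum, ← Finset.sum_sub_distrib]
    exact Finset.sum_congr rfl fun i _ => by ring
  rw [hexp, hp, hcount] at hsum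
  linarith

/-- The rectangular diagonal matrix of an SVD, written exactly as in `IsTopSVD`. -/
noncomputable def rectDiag (m n : ℕ) (σ : Fin (min m n) → ℝ) : Matrix (Fin m) (Fin n) ℝ :=
  Matrix.of fun (i : Fin m) (j : Fin n) =>
    if h : (i : ℕ) = (j : ℕ) ∧ (i : ℕ) < min m n then σ ⟨i, h.2⟩ else 0

lemma rectDiag_mul_transpose (m n : ℕ) (σ : Fin (min m n) → ℝ) :
    rectDiag m n σ * (rectDiag m n σ)ᵀ =
      Matrix.diagonal fun i : Fin m => if h : (i : ℕ) < min m n then σ ⟨i, h⟩ ^ 2 else 0 := by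
  ext i i'
  rw [Matrix.mul_apply]
  simp only [rectDiag, Matrix.transpose_apply, Matrix.of_apply]
  by_cases h : (i : ℕ) < min m n
  · rw [Finset.sum_eq_single (⟨i, by omega⟩ : Fin n)]
    · by_cases hi : i = i'
      · subst hi
        have h2 : (i : ℕ) < n := by omega
        simp [sq, h2]
      · have : ¬ ((i' : ℕ) = (i : ℕ)) := fun h' => hi (Fin.ext h'.symm)
        simp [h, hi, this]
    · intro j _ hj
      have : ¬ ((i : ℕ) = (j : ℕ)) := fun h' => hj (Fin.ext h'.symm)
      simp [this]
    · simp
  · rw [Finset.sum_eq_zero]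
    · by_cases hi : i = i'
      · subst hi
        rw [Matrix.diagonal_apply_eq, dif_neg h]
      · simp [hi]
    · intro j _
      rw [dif_neg (fun h' => h h'.2), zero_mul]

lemma rank_rectDiag_le {m n : ℕ} (σ : Fin (min m n) → ℝ) (a : ℕ)
    (h : ∀ i : Fin (min m n), a ≤ i → σ i = 0) : (rectDiag m n σ).rank ≤ a := by
  have hE : rectDiag m n σ = rectDiag m n σ *
      Matrix.diagonal (fun j : Fin n => if (j : ℕ) < a then (1 : ℝ) else 0) := by
    ext i j
    rw [Matrix.mul_diagonal]
    simp only [rectDiag, Matrix.of_apply]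
    split_ifs with h1 h2 h2
    · simp
    · rw [mul_zero]
      exact h _ (by simp only; omega)
    · simp
    · simp
  rw [hE]
  refine (Matrix.rank_mul_le_right _ _).trans ?_
  rw [Matrix.rank_diagonal, Fintype.card_subtype]
  have : (Finset.univ.filter fun j : Fin n => (if (j : ℕ) < a then (1 : ℝ) else 0) ≠ 0)
      = Finset.univ.filter fun j : Fin n => (j : ℕ) < a := by
    ext j; simp
  rw [this, Fin.card_filter_val_lt]
  exact min_le_right _ _

/-- If `D Dᵀ` is diagonal, the captured mass `‖Yᵀ D‖²` is a weighted sum of the row norms of `Y`,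
which reduces the variational problem to `sum_mul_le_sum_first`. -/
lemma frobSq_transpose_mul_of_diag {m d k : ℕ} (D : Matrix (Fin m) (Fin d) ℝ) (s : Fin m → ℝ)
    (hD : D * Dᵀ = Matrix.diagonal s) (Y : Matrix (Fin m) (Fin k) ℝ) :
    frobSq (Yᵀ * D) = ∑ i, s i * rowNormSq Y i := by
  rw [frobSq_eq_trace', Matrix.transpose_mul, Matrix.transpose_transpose, Matrix.mul_assoc,
    ← Matrix.mul_assoc D, hD, Matrix.trace_mul_comm, Matrix.mul_assoc, Matrix.trace]
  refine Finset.sum_congr rfl fun i _ => ?_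
  rw [Matrix.diag_apply, Matrix.diagonal_mul, Matrix.mul_apply]
  simp [rowNormSq, sq]

/-- Top-`k` left singular vectors in the sense of an SVD satisfy the variational description, as
soon as `k` does not exceed the rank. -/
lemma IsTopLeftSingular.isKyFanTop {m d k : ℕ} {A : Matrix (Fin m) (Fin d) ℝ}
    {U : Matrix (Fin m) (Fin k) ℝ} (h : IsTopLeftSingular A U) (hk : k ≤ A.rank) :
    IsKyFanTop A U := by
  obtain ⟨V, hkm, hkn, Uf, Vf, σ, hUf, hVf, hσ, hσ0, hA, rfl, -⟩ := h
  change A = Uf * rectDiag m d σ * Vfᵀ at hA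
  set D := rectDiag m d σ with hD
  have hUf' : Uf * Ufᵀ = 1 := mul_eq_one_comm.1 hUf
  have hVf' : Vf * Vfᵀ = 1 := mul_eq_one_comm.1 hVf
  have hkmin : k ≤ min m d := le_min hkm hkn
  have hpos : ∀ j : Fin k, σ (Fin.castLE hkmin j) ≠ 0 := by
    intro j hj
    have h1 : D.rank ≤ j := by
      refine rank_rectDiag_le σ j fun i hi => le_antisymm ?_ (hσ0 i)
      rw [← hj]
      exact hσ _ _ (Fin.le_def.2 hi)
    have h2 : A.rank ≤ D.rank := by
      rw [hA]
      exact (Matrix.rank_mul_le_left _ _).trans (Matrix.rank_mul_le_right _ _)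
    have := j.2
    omega
  set Y₀ : Matrix (Fin m) (Fin k) ℝ := (1 : Matrix (Fin m) (Fin m) ℝ).submatrix id (Fin.castLE hkm)
    with hY₀
  have hUY : Uf.submatrix id (Fin.castLE hkm) = Uf * Y₀ := by
    rw [hY₀]
    ext i j
    simp [Matrix.mul_apply, Matrix.one_apply]
  have hY₀1 : Y₀ᵀ * Y₀ = 1 := by
    ext i j
    simp [hY₀, Matrix.mul_apply, Matrix.one_apply]
  have hfrob : ∀ Y : Matrix (Fin m) (Fin k) ℝ, frobSq ((Uf * Y)ᵀ * A) = frobSq (Yᵀ * D) := by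
    intro Y
    have e : (Uf * Y)ᵀ * A = Yᵀ * D * Vfᵀ := by
      rw [hA, Matrix.transpose_mul, Matrix.mul_assoc, ← Matrix.mul_assoc Ufᵀ,
        ← Matrix.mul_assoc Ufᵀ, hUf, Matrix.one_mul, Matrix.mul_assoc]
    rw [e, frobSq_eq_trace', frobSq_eq_trace' (Yᵀ * D), Matrix.transpose_mul _ Vfᵀ,
      Matrix.transpose_transpose, Matrix.mul_assoc, ← Matrix.mul_assoc Vfᵀ, hVf, Matrix.one_mul]
  have hDD := rectDiag_mul_transpose m d σ
  refine ⟨?_, ?_, ?_⟩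
  · rw [hUY, Matrix.transpose_mul, Matrix.mul_assoc, ← Matrix.mul_assoc Ufᵀ, hUf, Matrix.one_mul,
      hY₀1]
  · refine ⟨Vf * Matrix.of fun (i : Fin d) (j : Fin k) =>
      if (i : ℕ) = j then (σ (Fin.castLE hkmin j))⁻¹ else 0, ?_⟩
    rw [hA, hUY, Matrix.mul_assoc _ Vfᵀ, ← Matrix.mul_assoc Vfᵀ, hVf, Matrix.one_mul,
      Matrix.mul_assoc]
    congr 1
    ext i j
    rw [Matrix.mul_apply, Finset.sum_eq_single (Fin.castLE hkn j)]
    · simp only [hY₀, hD, rectDiag, Matrix.of_apply, Matrix.submatrix_apply, id, Fin.val_castLE,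
        if_true, Matrix.one_apply, Fin.ext_iff]
      by_cases hij : (i : ℕ) = j
      · have : (i : ℕ) < min m d := by have := j.2; omega
        rw [dif_pos ⟨hij, this⟩, if_pos hij]
        have e : (⟨i, this⟩ : Fin (min m d)) = Fin.castLE hkmin j := Fin.ext hij
        rw [e, mul_inv_cancel₀ (hpos j)]
      · rw [dif_neg (fun h => hij h.1), if_neg hij, zero_mul]
    · intro l _ hl
      have : ¬ ((l : ℕ) = j) := fun h' => hl (Fin.ext h')
      simp [this]
    · simp
  · intro U' hU'
    have hU'e : U' = Uf * (Ufᵀ * U') := by rw [← Matrix.mul_assoc, hUf', Matrix.one_mul]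
    have hY1 : (Ufᵀ * U')ᵀ * (Ufᵀ * U') = 1 := by
      rw [Matrix.transpose_mul, Matrix.transpose_transpose, Matrix.mul_assoc,
        ← Matrix.mul_assoc Uf, hUf', Matrix.one_mul, hU']
    rw [hU'e, hUY, hfrob, hfrob, frobSq_transpose_mul_of_diag D _ hDD,
      frobSq_transpose_mul_of_diag D _ hDD]
    have hrow : ∀ i, rowNormSq Y₀ i = if (i : ℕ) < k then 1 else 0 := by
      intro i
      simp only [rowNormSq, hY₀, Matrix.submatrix_apply, id, Matrix.one_apply, Fin.ext_iff,
        Fin.val_castLE]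
      split_ifs with hi
      · rw [Finset.sum_eq_single (⟨i, hi⟩ : Fin k)]
        · simp
        · intro j _ hj
          have : ¬ ((i : ℕ) = j) := fun h' => hj (Fin.ext h'.symm)
          simp [this]
        · simp
      · refine Finset.sum_eq_zero fun j _ => ?_
        have : ¬ ((i : ℕ) = j) := fun h' => hi (h' ▸ j.2)
        simp [this]
    simp only [hrow]
    refine sum_mul_le_sum_first hkm _ _ ?_ (rowNormSq_le_one hY1)
      (fun i => Finset.sum_nonneg fun _ _ => sq_nonneg _) (sum_rowNormSq hY1)
    intro i j hij
    have hij' : (i : ℕ) ≤ j := hij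
    by_cases hj : (j : ℕ) < min m d
    · have hi : (i : ℕ) < min m d := by omega
      rw [dif_pos hj, dif_pos hi]
      exact pow_le_pow_left₀ (hσ0 _) (hσ _ _ (Fin.le_def.2 hij')) 2
    · rw [dif_neg hj]
      split_ifs
      · positivity
      · rfl

end KyFan

/-! ### Gaussian measures -/

section GaussianLaw

open ProbabilityTheory

instance gaussMeasure_isProbabilityMeasure (m n : ℕ) (σ : NNReal) :
    IsProbabilityMeasure (gaussMeasure m n σ) := by
  unfold gaussMeasure; infer_instance

/-- The characteristic function of the noise depends on the functional only through its Frobenius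
norm, which is the source of orthogonal invariance. -/
lemma charFunDual_gaussMeasure {m n : ℕ} (σ : NNReal) (L : StrongDual ℝ (Fin m → Fin n → ℝ)) :
    charFunDual (gaussMeasure m n σ) L =
      Complex.exp (-((σ : ℝ) ^ 2 / 2 *
        frobSq (Matrix.of fun i j => L (Pi.single i (Pi.single j 1))) : ℝ)) := by
  unfold gaussMeasure
  rw [charFunDual_pi]
  simp only [charFunDual_pi]
  have h1 : ∀ (L' : StrongDual ℝ ℝ), charFunDual (gaussianReal 0 (σ ^ 2)) L' =
      Complex.exp (-((σ : ℝ) ^ 2 / 2 * (L' 1) ^ 2 : ℝ)) := by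
    intro L'
    have : charFunDual (gaussianReal 0 (σ ^ 2)) L' = charFun (gaussianReal 0 (σ ^ 2)) (L' 1) := by
      rw [charFunDual_apply, charFun_apply_real]
      congr 1
      ext x
      have : L' x = L' 1 * x := by
        rw [mul_comm, ← smul_eq_mul, ← map_smul]; simp
      rw [this]; push_cast; rfl
    rw [this, charFun_gaussianReal]
    congr 1
    push_cast
    ring
  simp only [h1, ← Complex.exp_sum]
  congr 1
  push_cast
  simp only [frobSq, Finset.mul_sum, ← Finset.sum_neg_distrib, Complex.ofReal_sum]
  refine Finset.sum_congr rfl fun i _ => Finset.sum_congr rfl fun j _ => ?_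
  push_cast
  rfl

/-- The law of a Gaussian matrix is invariant under left multiplication by an orthogonal matrix. -/
lemma gaussMeasure_map_orthogonal {m n : ℕ} (σ : NNReal) {O : Matrix (Fin m) (Fin m) ℝ}
    (hO : Oᵀ * O = 1) :
    (gaussMeasure m n σ).map (fun R i j => (O * Matrix.of R) i j) = gaussMeasure m n σ := by
  let T₀ : (Fin m → Fin n → ℝ) →ₗ[ℝ] (Fin m → Fin n → ℝ) :=
    { toFun := fun R i j => (O * Matrix.of R) i j
      map_add' := fun x y => by
        ext i j; simp [Matrix.mul_apply, mul_add, Finset.sum_add_distrib]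
      map_smul' := fun t x => by
        ext i j
        simp only [Matrix.mul_apply, Matrix.of_apply, Pi.smul_apply, smul_eq_mul, RingHom.id_apply,
          Finset.mul_sum]
        exact Finset.sum_congr rfl fun _ _ => by ring }
  let T := LinearMap.toContinuousLinearMap T₀
  change (gaussMeasure m n σ).map T = _
  have : IsProbabilityMeasure ((gaussMeasure m n σ).map T) :=
    Measure.isProbabilityMeasure_map T.continuous.measurable.aemeasurable
  refine Measure.ext_of_charFunDual ?_
  ext L
  rw [charFunDual_map, charFunDual_gaussMeasure, charFunDual_gaussMeasure]
  set a : Matrix (Fin m) (Fin n) ℝ := Matrix.of fun i j => L (Pi.single i (Pi.single j 1)) with ha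
  have hb : (Matrix.of fun i j => (L.comp T) (Pi.single i (Pi.single j 1))) = Oᵀ * a := by
    ext i j
    have hT : T (Pi.single i (Pi.single j 1)) =
        ∑ l, O l i • Pi.single (M := fun _ => Fin n → ℝ) l (Pi.single j (1 : ℝ)) := by
      ext p q
      change (O * Matrix.of (Pi.single i (Pi.single j (1 : ℝ)))) p q = _
      rw [Matrix.mul_apply, Finset.sum_eq_single i]
      · simp only [Finset.sum_apply, Pi.smul_apply, Matrix.of_apply, Pi.single_eq_same, smul_eq_mul]
        rw [Finset.sum_eq_single p]
        · simp
        · intro b _ hb; simp [hb.symm]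
        · simp
      · intro b _ hb; simp [hb]
      · simp
    rw [Matrix.of_apply, ContinuousLinearMap.comp_apply, hT, map_sum, Matrix.mul_apply]
    simp [ha]
  rw [hb]
  have : frobSq (Oᵀ * a) = frobSq a := by
    rw [frobSq_eq_trace, frobSq_eq_trace, Matrix.transpose_mul, Matrix.transpose_transpose,
      Matrix.mul_assoc, ← Matrix.mul_assoc O, mul_eq_one_comm.1 hO, Matrix.one_mul]
  rw [this]

lemma pi_absolutelyContinuous {n : ℕ} {α : Type*} [MeasurableSpace α] {μ ν : Fin n → Measure α}
    [∀ i, SigmaFinite (μ i)] [∀ i, SigmaFinite (ν i)] (h : ∀ i, μ i ≪ ν i) :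
    Measure.pi μ ≪ Measure.pi ν := by
  induction n with
  | zero => rw [Measure.pi_of_empty, Measure.pi_of_empty]
  | succ n ih =>
    have hm := (measurePreserving_piFinSuccAbove μ 0).symm
    have hn := (measurePreserving_piFinSuccAbove ν 0).symm
    rw [← hm.map_eq, ← hn.map_eq]
    refine Measure.AbsolutelyContinuous.map ?_ hn.measurable
    exact (h 0).prod (ih fun i => h _)

lemma gaussMeasure_absolutelyContinuous (m n : ℕ) {σ : NNReal} (hσ : σ ≠ 0) :
    gaussMeasure m n σ ≪ volume := by
  refine pi_absolutelyContinuous fun _ => pi_absolutelyContinuous fun _ => ?_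
  exact gaussianReal_absolutelyContinuous 0 (pow_ne_zero 2 hσ)

/-- For `σ = 0` the noise law is the Dirac mass at `0`. -/
lemma ae_eq_zero_gaussMeasure (m n : ℕ) : ∀ᵐ R ∂gaussMeasure m n 0, R = 0 := by
  have h : ∀ i j, ∀ᵐ R ∂gaussMeasure m n 0, R i j = 0 := by
    intro i j
    have h1 : ∀ᵐ x ∂gaussianReal 0 ((0 : NNReal) ^ 2), x = 0 := by
      rw [zero_pow two_ne_zero, gaussianReal_zero_var, ae_dirac_eq]
      rfl
    have h2 : ∀ᵐ v ∂Measure.pi fun _ : Fin n => gaussianReal 0 ((0 : NNReal) ^ 2), v j = 0 :=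
      (Measure.tendsto_eval_ae_ae (μ := fun _ : Fin n => gaussianReal 0 ((0 : NNReal) ^ 2))
        (i := j)).eventually h1
    exact (Measure.tendsto_eval_ae_ae (μ := fun _ : Fin m => Measure.pi fun _ : Fin n =>
      gaussianReal 0 ((0 : NNReal) ^ 2)) (i := i)).eventually h2
  filter_upwards [ae_all_iff.2 fun i => ae_all_iff.2 (h i)] with R hR
  ext i j
  exact hR i j

/-- Standard Gaussian measure on `ℝ^m`. -/
noncomputable def stdGauss (m : ℕ) : Measure (Fin m → ℝ) :=
  Measure.pi fun _ => gaussianReal 0 1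

instance stdGauss_isProbabilityMeasure (m : ℕ) : IsProbabilityMeasure (stdGauss m) := by
  unfold stdGauss; infer_instance

lemma hasSubgaussianMGF_gaussianReal (a : ℝ) :
    HasSubgaussianMGF (fun x => a * x) (‖a‖₊ ^ 2) (gaussianReal 0 1) where
  integrable_exp_mul t := by
    have := integrable_exp_mul_gaussianReal (μ := 0) (v := 1) (t * a)
    simpa [mul_assoc] using this
  mgf_le t := by
    have h : mgf (fun x => a * x) (gaussianReal 0 1) t = mgf id (gaussianReal 0 1) (t * a) := by
      simp [mgf, mul_assoc]
    rw [h, mgf_id_gaussianReal]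
    apply le_of_eq
    simp only [NNReal.coe_pow, coe_nnnorm, Real.norm_eq_abs, sq_abs, NNReal.coe_one]
    congr 1
    ring

/-- Gaussian tail bound for a linear functional of norm at most one. -/
lemma stdGauss_linear_tail {m : ℕ} (v : Fin m → ℝ) (hv : ∑ j, v j ^ 2 ≤ 1) {ε : ℝ} (hε : 0 ≤ ε) :
    stdGauss m {g | ε ^ 2 ≤ (∑ j, v j * g j) ^ 2} ≤ ENNReal.ofReal (2 * Real.exp (-ε ^ 2 / 2)) := by
  have one : ∀ w : Fin m → ℝ, ∑ j, w j ^ 2 ≤ 1 →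
      (stdGauss m).real {g | ε ≤ ∑ j, w j * g j} ≤ Real.exp (-ε ^ 2 / 2) := by
    intro w hw
    have hind : iIndepFun (fun j (g : Fin m → ℝ) => w j * g j) (stdGauss m) :=
      iIndepFun_pi (X := fun j x => w j * x) fun j => by fun_prop
    have hsum := HasSubgaussianMGF.sum_of_iIndepFun hind
      (c := fun j => ‖w j‖₊ ^ 2) (s := Finset.univ) (fun j _ => by
        refine HasSubgaussianMGF.of_map (Y := fun g : Fin m → ℝ => g j) (X := fun x => w j * x)
          (measurable_pi_apply j).aemeasurable ?_
        have := (measurePreserving_eval (fun _ : Fin m => gaussianReal 0 1) j).map_eq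
        change HasSubgaussianMGF _ _ ((stdGauss m).map (Function.eval j))
        rw [stdGauss, this]
        exact hasSubgaussianMGF_gaussianReal _)
    have h1 : HasSubgaussianMGF (fun g : Fin m → ℝ => ∑ j, w j * g j) 1 (stdGauss m) :=
      { integrable_exp_mul := hsum.integrable_exp_mul
        mgf_le := fun t => (hsum.mgf_le t).trans <| by
          rw [NNReal.coe_sum, NNReal.coe_one]
          simp only [NNReal.coe_pow, coe_nnnorm, Real.norm_eq_abs, sq_abs]
          gcongr }
    simpa using h1.measure_ge_le hε
  have hsub : {g : Fin m → ℝ | ε ^ 2 ≤ (∑ j, v j * g j) ^ 2} ⊆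
      {g | ε ≤ ∑ j, v j * g j} ∪ {g | ε ≤ ∑ j, (-v j) * g j} := by
    intro g hg
    have h1 : ε ≤ |∑ j, v j * g j| := by
      rw [Set.mem_ofPred_eq] at hg
      have := sq_le_sq.1 hg
      rwa [abs_of_nonneg hε] at this
    rcases le_abs.1 h1 with h | h
    · exact Or.inl h
    · refine Or.inr ?_
      simpa only [Set.mem_ofPred_eq, neg_mul, Finset.sum_neg_distrib] using h
  calc stdGauss m {g | ε ^ 2 ≤ (∑ j, v j * g j) ^ 2}
      ≤ _ := measure_mono hsub
    _ ≤ _ := measure_union_le _ _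
    _ ≤ ENNReal.ofReal (Real.exp (-ε ^ 2 / 2)) + ENNReal.ofReal (Real.exp (-ε ^ 2 / 2)) := by
        gcongr
        · rw [← ofReal_measureReal]
          exact ENNReal.ofReal_le_ofReal (one v hv)
        · rw [← ofReal_measureReal]
          exact ENNReal.ofReal_le_ofReal (one (fun j => -v j) (by simpa using hv))
    _ = _ := by rw [← ENNReal.ofReal_add (by positivity) (by positivity), two_mul]

lemma integral_exp_neg_half_sq_gaussianReal :
    ∫ x, Real.exp (-(x ^ 2 / 2)) ∂gaussianReal 0 1 = √(1 / 2) := by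
  rw [integral_gaussianReal_eq_integral_smul one_ne_zero]
  have : ∀ x : ℝ, gaussianPDFReal 0 1 x • Real.exp (-(x ^ 2 / 2)) =
      (√(2 * Real.pi))⁻¹ * Real.exp (-1 * x ^ 2) := by
    intro x
    rw [gaussianPDFReal]
    simp only [NNReal.coe_one, mul_one, sub_zero, smul_eq_mul]
    rw [mul_assoc, ← Real.exp_add]
    congr 2
    ring
  simp only [this]
  rw [integral_const_mul, integral_gaussian, ← Real.sqrt_inv, ← Real.sqrt_mul (by positivity)]
  congr 1
  field_simp

/-- Lower tail of a chi-square variable with at least `3m/4` degrees of freedom, from Markov's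
inequality for `exp (-χ²/2)`, whose mean is a power of `2^(-1/2)`. -/
lemma stdGauss_norm_tail {m r : ℕ} (hr : (r : ℝ) ≤ (m : ℝ) / 4) :
    stdGauss m {g | ∑ j : Fin m, (if (j : ℕ) < r then 0 else g j) ^ 2 ≤ (m : ℝ) / 4} ≤
      ENNReal.ofReal (Real.exp (-(m : ℝ) / 8)) := by
  set φ : Fin m → ℝ → ℝ := fun j x => Real.exp (-((if (j : ℕ) < r then 0 else x) ^ 2 / 2)) with hφ
  have hφi : ∀ j, ∫ x, φ j x ∂gaussianReal 0 1 = if (j : ℕ) < r then 1 else √(1 / 2) := by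
    intro j
    by_cases h : (j : ℕ) < r
    · simp [hφ, h]
    · simp only [hφ, h, if_false]
      exact integral_exp_neg_half_sq_gaussianReal
  have hint : ∫ g, ∏ j, φ j (g j) ∂stdGauss m = √(1 / 2) ^ (m - min m r) := by
    rw [stdGauss, integral_fintype_prod_eq_prod]
    simp only [hφi]
    rw [Finset.prod_ite, Finset.prod_const_one, one_mul, Finset.prod_const]
    congr 1
    have h1 := Finset.card_filter_add_card_filter_not (s := (Finset.univ : Finset (Fin m)))
      (p := fun j => (j : ℕ) < r)
    rw [Fin.card_filter_val_lt, Finset.card_univ, Fintype.card_fin] at h1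
    omega
  have hexp : ∀ g : Fin m → ℝ, ∏ j, φ j (g j) =
      Real.exp (-(∑ j : Fin m, (if (j : ℕ) < r then 0 else g j) ^ 2) / 2) := by
    intro g
    rw [← Real.exp_sum, neg_div, Finset.sum_div, Finset.sum_neg_distrib]
  have hmeas : Measurable fun g : Fin m → ℝ => ∏ j, φ j (g j) := by
    refine Finset.measurable_prod _ fun j _ => ?_
    have hj : Measurable fun g : Fin m → ℝ => g j := measurable_pi_apply j
    refine Measurable.comp (g := φ j) ?_ hj
    by_cases h : (j : ℕ) < r
    · simp only [hφ, h, if_true]; fun_prop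
    · simp only [hφ, h, if_false]; fun_prop
  have hintg : Integrable (fun g : Fin m → ℝ => ∏ j, φ j (g j)) (stdGauss m) := by
    refine Integrable.of_bound hmeas.aestronglyMeasurable 1 (Filter.Eventually.of_forall fun g => ?_)
    rw [hexp, Real.norm_eq_abs, abs_of_nonneg (Real.exp_pos _).le, Real.exp_le_one_iff]
    have : 0 ≤ ∑ j : Fin m, (if (j : ℕ) < r then 0 else g j) ^ 2 :=
      Finset.sum_nonneg fun _ _ => sq_nonneg _
    linarith
  have hmarkov := mul_meas_ge_le_integral_of_nonneg (μ := stdGauss m)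
    (f := fun g : Fin m → ℝ => ∏ j, φ j (g j))
    (Filter.Eventually.of_forall fun g => by simp only [hexp]; exact (Real.exp_pos _).le) hintg
    (Real.exp (-(m : ℝ) / 8))
  rw [hint] at hmarkov
  have hpow : √(1 / 2) ^ (m - min m r) ≤ Real.exp (-(m : ℝ) / 4) := by
    have hs : √(1 / 2 : ℝ) = Real.exp (-(Real.log 2 / 2)) := by
      rw [Real.sqrt_eq_rpow, Real.rpow_def_of_pos (by norm_num), one_div, Real.log_inv]
      congr 1
      ring
    have hrm : r ≤ m := by
      have : (r : ℝ) ≤ m := hr.trans (by have : (0 : ℝ) ≤ m := m.cast_nonneg; linarith)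
      exact_mod_cast this
    rw [hs, ← Real.exp_nat_mul, Real.exp_le_exp, min_eq_right hrm, Nat.cast_sub hrm]
    have := Real.log_two_gt_d9
    have h0 : (0 : ℝ) ≤ m := m.cast_nonneg
    nlinarith
  have hreal : (stdGauss m).real
      {g | ∑ j : Fin m, (if (j : ℕ) < r then 0 else g j) ^ 2 ≤ (m : ℝ) / 4} ≤
      Real.exp (-(m : ℝ) / 8) := by
    have h1 : (stdGauss m).real
        {g | ∑ j : Fin m, (if (j : ℕ) < r then 0 else g j) ^ 2 ≤ (m : ℝ) / 4} ≤
        (stdGauss m).real {g | Real.exp (-(m : ℝ) / 8) ≤ ∏ j, φ j (g j)} := by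
      refine measureReal_mono fun g hg => ?_
      simp only [Set.mem_ofPred_eq] at hg ⊢
      rw [hexp, Real.exp_le_exp]
      linarith
    refine h1.trans ?_
    have h2 := hmarkov.trans hpow
    have h3 : Real.exp (-(m : ℝ) / 4) = Real.exp (-(m : ℝ) / 8) * Real.exp (-(m : ℝ) / 8) := by
      rw [← Real.exp_add]; congr 1; ring
    rw [h3] at h2
    exact le_of_mul_le_mul_left h2 (Real.exp_pos _)
  rw [← ofReal_measureReal]
  exact ENNReal.ofReal_le_ofReal hreal

end GaussianLaw

/-! ### Householder reflections and the orthogonal complement of the column space -/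

/-- The singular values of a rank `r` matrix vanish from index `r` on, so that the left singular
vectors from index `r` on are orthogonal to its columns. -/
lemma transpose_mul_row_eq_zero {m n : ℕ} {C : Matrix (Fin m) (Fin n) ℝ}
    {Uf : Matrix (Fin m) (Fin m) ℝ} {Vf : Matrix (Fin n) (Fin n) ℝ} {σ : Fin (min m n) → ℝ}
    (hUf : Ufᵀ * Uf = 1) (hVf : Vfᵀ * Vf = 1) (hσ : ∀ i j, i ≤ j → σ j ≤ σ i) (hσ0 : ∀ i, 0 ≤ σ i)
    (hC : C = Uf * rectDiag m n σ * Vfᵀ) (j : Fin m) (hj : C.rank ≤ j) (q : Fin n) :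
    (Ufᵀ * C) j q = 0 := by
  have hUC : Ufᵀ * C = rectDiag m n σ * Vfᵀ := by
    rw [hC, ← Matrix.mul_assoc, ← Matrix.mul_assoc, hUf, Matrix.one_mul]
  have hzero : ∀ i : Fin (min m n), C.rank ≤ i → σ i = 0 := by
    intro i hi
    by_contra hne
    have hpos : 0 < σ i := lt_of_le_of_ne (hσ0 i) (Ne.symm hne)
    set w : Fin m → ℝ := fun i : Fin m => if h : (i : ℕ) < min m n then σ ⟨i, h⟩ ^ 2 else 0
    have h1 : (Ufᵀ * C) * (Ufᵀ * C)ᵀ = Matrix.diagonal w := by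
      rw [hUC, Matrix.transpose_mul, Matrix.transpose_transpose, Matrix.mul_assoc,
        ← Matrix.mul_assoc Vfᵀ, hVf, Matrix.one_mul, rectDiag_mul_transpose]
    have h2 : (Matrix.diagonal w).rank ≤ C.rank := by
      rw [← h1]
      exact (Matrix.rank_mul_le_left _ _).trans (Matrix.rank_mul_le_right _ _)
    rw [Matrix.rank_diagonal] at h2
    have him : (i : ℕ) < min m n := i.2
    have h3 : Fintype.card (Fin (i + 1)) ≤ Fintype.card {l // w l ≠ 0} := by
      refine Fintype.card_le_of_injective (fun l : Fin (i + 1) =>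
        (⟨⟨l, by omega⟩, ?_⟩ : {l // w l ≠ 0})) ?_
      · have hl : (l : ℕ) < min m n := by omega
        have : σ i ≤ σ ⟨l, hl⟩ := hσ _ _ (by rw [Fin.le_def]; simp; omega)
        simp only [w, hl, dif_pos]
        exact pow_ne_zero 2 (by linarith)
      · intro a b hab
        simpa [Fin.ext_iff] using hab
    rw [Fintype.card_fin] at h3
    omega
  rw [hUC, Matrix.mul_apply]
  refine Finset.sum_eq_zero fun x _ => ?_
  have : rectDiag m n σ j x = 0 := by
    simp only [rectDiag, Matrix.of_apply]
    split_ifs with h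
    · exact hzero _ hj
    · rfl
  rw [this, zero_mul]

/-- The Householder reflection along `z` (the identity if `z = 0`). -/
noncomputable def householder {m : ℕ} (z : Fin m → ℝ) : Matrix (Fin m) (Fin m) ℝ :=
  1 - (2 / (z ⬝ᵥ z)) • Matrix.vecMulVec z z

lemma householder_transpose {m : ℕ} (z : Fin m → ℝ) : (householder z)ᵀ = householder z := by
  simp [householder, Matrix.transpose_sub, Matrix.transpose_smul, Matrix.transpose_vecMulVec]

lemma householder_mulVec {m : ℕ} (z x : Fin m → ℝ) :
    householder z *ᵥ x = x - (2 / (z ⬝ᵥ z) * (z ⬝ᵥ x)) • z := by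
  rw [householder, Matrix.sub_mulVec, Matrix.one_mulVec, Matrix.smul_mulVec,
    Matrix.vecMulVec_mulVec]
  ext i
  simp
  ring

lemma householder_orthogonal {m : ℕ} (z : Fin m → ℝ) :
    (householder z)ᵀ * householder z = 1 := by
  rw [householder_transpose, ← Matrix.mulVec_injective.eq_iff]
  ext x i
  rw [← Matrix.mulVec_mulVec, householder_mulVec, householder_mulVec, Matrix.one_mulVec,
    dotProduct_sub, dotProduct_smul]
  by_cases hz : z ⬝ᵥ z = 0
  · simp [hz]
  · simp
    field_simp
    ring

lemma householder_mulVec_sub {m : ℕ} (x y : Fin m → ℝ) (h : x ⬝ᵥ x = y ⬝ᵥ y) :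
    householder (x - y) *ᵥ x = y := by
  rw [householder_mulVec]
  by_cases hz : (x - y) ⬝ᵥ (x - y) = 0
  · have := dotProduct_self_eq_zero.1 hz
    have hxy : x = y := sub_eq_zero.1 this
    simp [hxy]
  · have : (2 / ((x - y) ⬝ᵥ (x - y)) * ((x - y) ⬝ᵥ x)) = 1 := by
      rw [div_mul_eq_mul_div, div_eq_one_iff_eq hz, sub_dotProduct, sub_dotProduct, dotProduct_sub,
        dotProduct_sub, dotProduct_comm y x, h]
      ring
    rw [this, one_smul, sub_sub_cancel]

lemma householder_mul_of_orthogonal {m n : ℕ} {z : Fin m → ℝ} {C : Matrix (Fin m) (Fin n) ℝ}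
    (h : z ᵥ* C = 0) : householder z * C = C := by
  rw [householder, Matrix.sub_mul, Matrix.one_mul, Matrix.smul_mul, Matrix.vecMulVec_mul, h]
  ext i j
  simp [Matrix.vecMulVec_apply]

/-- The vector with coordinates `g_j`, `j ≥ r`, in the basis of the columns of `Uf`.
For `g` the `i`-th row of an orthogonal `Uf` it is the component of the `i`-th standard basis vector
orthogonal to the first `r` columns of `Uf`. -/
noncomputable def tailVec {m : ℕ} (Uf : Matrix (Fin m) (Fin m) ℝ) (r : ℕ) (g : Fin m → ℝ) :
    Fin m → ℝ :=
  Uf *ᵥ fun j => if (j : ℕ) < r then 0 else g j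

lemma tailVec_dotProduct_self {m : ℕ} {Uf : Matrix (Fin m) (Fin m) ℝ} (hUf : Ufᵀ * Uf = 1) (r : ℕ)
    (g : Fin m → ℝ) :
    tailVec Uf r g ⬝ᵥ tailVec Uf r g = ∑ j : Fin m, (if (j : ℕ) < r then 0 else g j) ^ 2 := by
  rw [tailVec, Matrix.dotProduct_mulVec, Matrix.vecMul_mulVec, hUf, Matrix.vecMul_one]
  exact Finset.sum_congr rfl fun _ _ => (sq _).symm

lemma tailVec_vecMul {m n r : ℕ} {Uf : Matrix (Fin m) (Fin m) ℝ} {C : Matrix (Fin m) (Fin n) ℝ}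
    (hC : ∀ j : Fin m, r ≤ j → ∀ q, (Ufᵀ * C) j q = 0) (g : Fin m → ℝ) :
    tailVec Uf r g ᵥ* C = 0 := by
  rw [tailVec, ← Matrix.vecMul_transpose, Matrix.vecMul_vecMul]
  ext q
  rw [Matrix.vecMul, dotProduct, Pi.zero_apply]
  refine Finset.sum_eq_zero fun j _ => ?_
  split_ifs with h
  · rw [zero_mul]
  · rw [hC j (not_lt.1 h), mul_zero]

/-- Bessel's inequality. -/
lemma transpose_mulVec_dotProduct_le {m k : ℕ} {U : Matrix (Fin m) (Fin k) ℝ} (hU : Uᵀ * U = 1)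
    (x : Fin m → ℝ) : (Uᵀ *ᵥ x) ⬝ᵥ (Uᵀ *ᵥ x) ≤ x ⬝ᵥ x := by
  have h0 : 0 ≤ (x - U *ᵥ (Uᵀ *ᵥ x)) ⬝ᵥ (x - U *ᵥ (Uᵀ *ᵥ x)) :=
    Finset.sum_nonneg fun i _ => mul_self_nonneg _
  have h1 : x ⬝ᵥ (U *ᵥ (Uᵀ *ᵥ x)) = (Uᵀ *ᵥ x) ⬝ᵥ (Uᵀ *ᵥ x) := by
    rw [Matrix.dotProduct_mulVec, Matrix.mulVec_transpose]
  have h2 : (U *ᵥ (Uᵀ *ᵥ x)) ⬝ᵥ (U *ᵥ (Uᵀ *ᵥ x)) = (Uᵀ *ᵥ x) ⬝ᵥ (Uᵀ *ᵥ x) := by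
    rw [Matrix.dotProduct_mulVec, Matrix.vecMul_mulVec, hU, Matrix.vecMul_one]
  rw [sub_dotProduct, dotProduct_sub, dotProduct_sub, h2, dotProduct_comm (U *ᵥ (Uᵀ *ᵥ x)) x, h1] at h0
  linarith

/-- The row norm of `U` splits along the span of the first `r` columns of `Uf` and its
complement. -/
lemma rowNormSq_le_add {m k r : ℕ} (hrm : r ≤ m) {Uf : Matrix (Fin m) (Fin m) ℝ}
    (hUf : Ufᵀ * Uf = 1) {U : Matrix (Fin m) (Fin k) ℝ} (hU : Uᵀ * U = 1) (i : Fin m) :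
    rowNormSq U i ≤ 2 * rowNormSq (Uf.submatrix id (Fin.castLE hrm)) i +
      2 * ((Uᵀ *ᵥ tailVec Uf r (Uf i)) ⬝ᵥ (Uᵀ *ᵥ tailVec Uf r (Uf i))) := by
  set a : Fin m → ℝ := Uf *ᵥ fun j => if (j : ℕ) < r then Uf i j else 0 with ha
  have hsum : a + tailVec Uf r (Uf i) = Pi.single i 1 := by
    rw [ha, tailVec, ← Matrix.mulVec_add]
    have : (fun j : Fin m => if (j : ℕ) < r then Uf i j else 0) +
        (fun j : Fin m => if (j : ℕ) < r then 0 else Uf i j) = Ufᵀ *ᵥ Pi.single i 1 := by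
      ext j
      simp only [Pi.add_apply, Matrix.mulVec_single_one, Matrix.col_apply, Matrix.transpose_apply]
      split_ifs <;> simp
    rw [this, Matrix.mulVec_mulVec, mul_eq_one_comm.1 hUf, Matrix.one_mulVec]
  have hrow : rowNormSq U i = (Uᵀ *ᵥ Pi.single i 1) ⬝ᵥ (Uᵀ *ᵥ Pi.single i 1) := by
    simp [rowNormSq, dotProduct, sq]
  have haa : a ⬝ᵥ a = rowNormSq (Uf.submatrix id (Fin.castLE hrm)) i := by
    rw [ha, Matrix.dotProduct_mulVec, Matrix.vecMul_mulVec, hUf, Matrix.vecMul_one]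
    simp only [rowNormSq, dotProduct, Matrix.submatrix_apply, id]
    have h1 : ∀ j : Fin m, (if (j : ℕ) < r then Uf i j else 0) * (if (j : ℕ) < r then Uf i j else 0)
        = if (j : ℕ) < r then Uf i j ^ 2 else 0 := by
      intro j; split_ifs <;> ring
    simp only [h1]
    rw [← Finset.sum_filter]
    symm
    refine Finset.sum_bij (fun l _ => Fin.castLE hrm l) ?_ ?_ ?_ ?_
    · intro l _; simp
    · intro a _ b _ h; simpa [Fin.ext_iff] using h
    · intro b hb
      exact ⟨⟨b, (Finset.mem_filter.1 hb).2⟩, Finset.mem_univ _, rfl⟩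
    · intro l _; rfl
  have hb := transpose_mulVec_dotProduct_le hU a
  rw [haa] at hb
  rw [hrow, ← hsum, Matrix.mulVec_add]
  set x := Uᵀ *ᵥ a
  set y := Uᵀ *ᵥ tailVec Uf r (Uf i)
  have h0 : 0 ≤ (x - y) ⬝ᵥ (x - y) := Finset.sum_nonneg fun i _ => mul_self_nonneg _
  simp only [sub_dotProduct, dotProduct_sub, add_dotProduct, dotProduct_add] at h0 ⊢
  rw [dotProduct_comm y x] at h0 ⊢
  linarith

/-! ### Reflected noise and the bad event -/

/-- The reflection exchanging the directions of `tailVec Uf r x` and `tailVec Uf r g`. If the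
latter vanishes, division by zero turns it into the reflection along `tailVec Uf r x`; it is
orthogonal in every case. -/
noncomputable def tailReflection {m : ℕ} (Uf : Matrix (Fin m) (Fin m) ℝ) (r : ℕ)
    (x g : Fin m → ℝ) : Matrix (Fin m) (Fin m) ℝ :=
  householder (tailVec Uf r x -
    (√(tailVec Uf r x ⬝ᵥ tailVec Uf r x) / √(tailVec Uf r g ⬝ᵥ tailVec Uf r g)) • tailVec Uf r g)

lemma dotProduct_self_nonneg' {m : ℕ} (x : Fin m → ℝ) : 0 ≤ x ⬝ᵥ x :=
  Finset.sum_nonneg fun _ _ => mul_self_nonneg _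

lemma tailReflection_mulVec {m : ℕ} (Uf : Matrix (Fin m) (Fin m) ℝ) (r : ℕ) (x g : Fin m → ℝ)
    (hg : 0 < tailVec Uf r g ⬝ᵥ tailVec Uf r g) :
    tailReflection Uf r x g *ᵥ tailVec Uf r x =
      (√(tailVec Uf r x ⬝ᵥ tailVec Uf r x) / √(tailVec Uf r g ⬝ᵥ tailVec Uf r g)) •
        tailVec Uf r g := by
  refine householder_mulVec_sub _ _ ?_
  rw [smul_dotProduct, dotProduct_smul, smul_eq_mul, smul_eq_mul, ← mul_assoc, ← sq, div_pow,
    Real.sq_sqrt (dotProduct_self_nonneg' _), Real.sq_sqrt hg.le, div_mul_cancel₀ _ hg.ne']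

/-- The reflections fix the column space of `C`, so they act on the noise alone. -/
lemma tailReflection_mul {m n r : ℕ} {Uf : Matrix (Fin m) (Fin m) ℝ} {C : Matrix (Fin m) (Fin n) ℝ}
    (hC : ∀ j : Fin m, r ≤ j → ∀ q, (Ufᵀ * C) j q = 0) (x g : Fin m → ℝ) :
    tailReflection Uf r x g * C = C := by
  refine householder_mul_of_orthogonal ?_
  rw [Matrix.sub_vecMul, Matrix.smul_vecMul, tailVec_vecMul hC, tailVec_vecMul hC]
  simp

/-- The event that some top-`k` matrix `U` of `(C + R) S` has `‖Uᵀ e‖² ≥ τ`. -/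
def badEvent {m n d : ℕ} (k : ℕ) (C : Matrix (Fin m) (Fin n) ℝ) (S : Matrix (Fin n) (Fin d) ℝ)
    (e : Fin m → ℝ) (τ : ℝ) : Set (Fin m → Fin n → ℝ) :=
  {R | ∃ U : Matrix (Fin m) (Fin k) ℝ,
    IsKyFanTop (addNoise C R * S) U ∧ τ ≤ (Uᵀ *ᵥ e) ⬝ᵥ (Uᵀ *ᵥ e)}

lemma transpose_mulVec_sq_eq {m k : ℕ} (U : Matrix (Fin m) (Fin k) ℝ) (x : Fin m → ℝ) :
    (Uᵀ *ᵥ x) ⬝ᵥ (Uᵀ *ᵥ x) = x ⬝ᵥ ((U * Uᵀ) *ᵥ x) := by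
  rw [← Matrix.mulVec_mulVec, Matrix.dotProduct_mulVec x, ← Matrix.mulVec_transpose]

/-- Reflecting the noise reflects the top singular vectors. -/
lemma isKyFanTop_of_reflection {m n d k r : ℕ} {Uf : Matrix (Fin m) (Fin m) ℝ}
    {C : Matrix (Fin m) (Fin n) ℝ} (hC : ∀ j : Fin m, r ≤ j → ∀ q, (Ufᵀ * C) j q = 0)
    (S : Matrix (Fin n) (Fin d) ℝ) (R : Fin m → Fin n → ℝ) {x g : Fin m → ℝ}
    {U : Matrix (Fin m) (Fin k) ℝ}
    (hU : IsKyFanTop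
      (addNoise C (fun i j => (tailReflection Uf r x g * Matrix.of R) i j) * S) U) :
    IsKyFanTop (addNoise C R * S) ((tailReflection Uf r x g)ᵀ * U) := by
  set O := tailReflection Uf r x g with hO
  have hOO : Oᵀ * O = 1 := householder_orthogonal _
  have hA : addNoise C (fun i j => (O * Matrix.of R) i j) = O * addNoise C R := by
    rw [addNoise, addNoise, Matrix.mul_add, hO, tailReflection_mul hC]
    rfl
  have := hU.orthogonal_mul (O := Oᵀ) (by rw [Matrix.transpose_transpose, mul_eq_one_comm.1 hOO])
  rwa [hA, Matrix.mul_assoc, ← Matrix.mul_assoc, hOO, Matrix.one_mul] at this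

/-- If the reflected noise is bad, then `g` has either a short tail or a tail with a large
inner product with some column of a fixed basis `U₀` of the top-`k` subspace of the original noisy
matrix. Uniqueness of that subspace makes `U₀` independent of `g`. -/
lemma mem_union_of_reflection_mem_badEvent {m n d k r : ℕ} {Uf : Matrix (Fin m) (Fin m) ℝ}
    (hUf : Ufᵀ * Uf = 1) {C : Matrix (Fin m) (Fin n) ℝ}
    (hC : ∀ j : Fin m, r ≤ j → ∀ q, (Ufᵀ * C) j q = 0) (S : Matrix (Fin n) (Fin d) ℝ)
    (R : Fin m → Fin n → ℝ) {x g : Fin m → ℝ} (hx : tailVec Uf r x ⬝ᵥ tailVec Uf r x ≤ 1) {τ t : ℝ}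
    (hm : 0 < m) (hτ : 4 * (k * t) ≤ m * τ)
    {U₀ : Matrix (Fin m) (Fin k) ℝ}
    (hU₀ : ∀ U : Matrix (Fin m) (Fin k) ℝ, IsKyFanTop (addNoise C R * S) U → U * Uᵀ = U₀ * U₀ᵀ)
    (h : (fun i j => (tailReflection Uf r x g * Matrix.of R) i j) ∈
      badEvent k C S (tailVec Uf r x) τ) (hk : 0 < k) :
    g ∈ {g : Fin m → ℝ | ∑ j : Fin m, (if (j : ℕ) < r then 0 else g j) ^ 2 ≤ (m : ℝ) / 4} ∪
      ⋃ l : Fin k, {g | t ≤ (∑ j : Fin m, (if (j : ℕ) < r then 0 else (Ufᵀ * U₀) j l) * g j) ^ 2} := by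
  by_cases hshort : ∑ j : Fin m, (if (j : ℕ) < r then 0 else g j) ^ 2 ≤ (m : ℝ) / 4
  · exact Or.inl hshort
  refine Or.inr ?_
  rw [← tailVec_dotProduct_self hUf, not_le] at hshort
  have hm' : (0 : ℝ) < m := by exact_mod_cast hm
  have hg : 0 < tailVec Uf r g ⬝ᵥ tailVec Uf r g := lt_trans (by positivity) hshort
  obtain ⟨U, hU, hτU⟩ := h
  set O := tailReflection Uf r x g with hO
  have hOT : Oᵀ = O := householder_transpose _
  have hOO : Oᵀ * O = 1 := householder_orthogonal _
  have hOO' : O * O = 1 := by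
    have := hOO
    rwa [hOT] at this
  have hU' : IsKyFanTop (addNoise C R * S) (Oᵀ * U) := isKyFanTop_of_reflection hC S R hU
  have hproj := hU₀ _ hU'
  set y := tailVec Uf r g with hy
  have h1 : (Uᵀ *ᵥ tailVec Uf r x) = ((Oᵀ * U)ᵀ *ᵥ (O *ᵥ tailVec Uf r x)) := by
    rw [Matrix.transpose_mul, Matrix.transpose_transpose, Matrix.mulVec_mulVec, Matrix.mul_assoc,
      hOO', Matrix.mul_one]
  set s := √(tailVec Uf r x ⬝ᵥ tailVec Uf r x) / √(y ⬝ᵥ y) with hs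
  have h2 : O *ᵥ tailVec Uf r x = s • y := tailReflection_mulVec Uf r x g hg
  have hs2 : s ^ 2 * (y ⬝ᵥ y) ≤ 1 := by
    rw [hs, div_pow, Real.sq_sqrt (dotProduct_self_nonneg' _), Real.sq_sqrt hg.le,
      div_mul_cancel₀ _ hg.ne']
    exact hx
  rw [h1, transpose_mulVec_sq_eq, hproj, ← transpose_mulVec_sq_eq, h2, Matrix.mulVec_smul,
    smul_dotProduct, dotProduct_smul, smul_eq_mul, smul_eq_mul, ← mul_assoc, ← sq] at hτU
  have hcoord : ∀ l, (U₀ᵀ *ᵥ y) l = ∑ j : Fin m, (if (j : ℕ) < r then 0 else (Ufᵀ * U₀) j l) * g j := by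
    intro l
    rw [hy, tailVec, Matrix.mulVec_mulVec, Matrix.mulVec, dotProduct]
    refine Finset.sum_congr rfl fun j _ => ?_
    have : (U₀ᵀ * Uf) l j = (Ufᵀ * U₀) j l := by
      rw [← Matrix.transpose_apply (U₀ᵀ * Uf), Matrix.transpose_mul, Matrix.transpose_transpose]
    rw [this]
    split_ifs <;> simp
  by_contra hcon
  simp only [Set.mem_iUnion, Set.mem_ofPred_eq, not_exists, not_le, ← hcoord] at hcon
  have hlt : (U₀ᵀ *ᵥ y) ⬝ᵥ (U₀ᵀ *ᵥ y) < k * t := by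
    calc (U₀ᵀ *ᵥ y) ⬝ᵥ (U₀ᵀ *ᵥ y) = ∑ l, (U₀ᵀ *ᵥ y) l ^ 2 := by simp [dotProduct, sq]
      _ < ∑ _l : Fin k, t := by
          refine Finset.sum_lt_sum_of_nonempty ?_ fun l _ => hcon l
          exact ⟨⟨0, hk⟩, Finset.mem_univ _⟩
      _ = k * t := by simp
  set q := (U₀ᵀ *ᵥ y) ⬝ᵥ (U₀ᵀ *ᵥ y)
  have hq : 0 ≤ q := dotProduct_self_nonneg' _
  -- The tail of `g` is not short: `y ⬝ᵥ y > m / 4`.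
  have h4 : s ^ 2 * m ≤ 4 := by nlinarith [sq_nonneg s]
  have h5 : m * τ ≤ 4 * q := by
    calc m * τ ≤ m * (s ^ 2 * q) := by gcongr
      _ = (s ^ 2 * m) * q := by ring
      _ ≤ 4 * q := by gcongr
  linarith

/-! ### Measurability and probability of the bad event -/

/-- The projection of a closed set along a `σ`-compact space is measurable. -/
lemma measurableSet_image_fst_of_isClosed {X Y : Type*} [TopologicalSpace X] [MeasurableSpace X]
    [BorelSpace X] [TopologicalSpace Y] [SigmaCompactSpace Y] {F : Set (X × Y)} (hF : IsClosed F) :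
    MeasurableSet (Prod.fst '' F) := by
  have heq : Prod.fst '' F = ⋃ N, Prod.fst ''
      ((fun p : X × compactCovering Y N => ((p.1, (p.2 : Y)) : X × Y)) ⁻¹' F) := by
    ext x
    simp only [Set.mem_iUnion, Set.mem_image]
    constructor
    · rintro ⟨⟨x, y⟩, h, rfl⟩
      obtain ⟨N, hN⟩ := exists_mem_compactCovering y
      exact ⟨N, (x, ⟨y, hN⟩), h, rfl⟩
    · rintro ⟨N, ⟨x, y⟩, h, rfl⟩
      exact ⟨_, h, rfl⟩
  rw [heq]
  refine MeasurableSet.iUnion fun N => ?_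
  have : CompactSpace (compactCovering Y N) :=
    isCompact_iff_compactSpace.1 (isCompact_compactCovering Y N)
  refine (isClosedMap_fst_of_compactSpace _ (hF.preimage ?_)).measurableSet
  exact continuous_fst.prodMk (continuous_subtype_val.comp continuous_snd)

/-- The bad event is a projection of a closed set of triples `(R, U, W)` with `U = (C + R) S W`. -/
lemma measurableSet_badEvent {m n d : ℕ} (k : ℕ) (C : Matrix (Fin m) (Fin n) ℝ)
    (S : Matrix (Fin n) (Fin d) ℝ) (e : Fin m → ℝ) (τ : ℝ) :
    MeasurableSet (badEvent k C S e τ) := by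
  let Z := (Fin m → Fin n → ℝ) × ((Fin m → Fin k → ℝ) × (Fin d → Fin k → ℝ))
  have hU : Continuous fun p : Z => Matrix.of p.2.1 := continuous_fst.comp continuous_snd
  have hW : Continuous fun p : Z => Matrix.of p.2.2 := continuous_snd.comp continuous_snd
  have hA : Continuous fun p : Z => addNoise C p.1 * S := by
    have h0 : Continuous fun p : Z => Matrix.of p.1 := continuous_fst
    exact (continuous_const.add h0).matrix_mul continuous_const
  have hfrob : ∀ {a b : ℕ}, Continuous fun A : Matrix (Fin a) (Fin b) ℝ => frobSq A := by
    intro a b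
    unfold frobSq
    exact continuous_finsetSum _ fun i _ => continuous_finsetSum _ fun j _ =>
      (continuous_id.matrix_elem i j).pow 2
  have h1 : IsClosed {p : Z | (Matrix.of p.2.1)ᵀ * Matrix.of p.2.1 = 1} :=
    isClosed_eq (hU.matrix_transpose.matrix_mul hU) continuous_const
  have h2 : IsClosed {p : Z | Matrix.of p.2.1 = addNoise C p.1 * S * Matrix.of p.2.2} :=
    isClosed_eq hU (hA.matrix_mul hW)
  have h3 : ∀ U' : Matrix (Fin m) (Fin k) ℝ, IsClosed {p : Z | U'ᵀ * U' = 1 →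
      frobSq (U'ᵀ * (addNoise C p.1 * S)) ≤
        frobSq ((Matrix.of p.2.1)ᵀ * (addNoise C p.1 * S))} := by
    intro U'
    by_cases h : U'ᵀ * U' = 1
    · simp only [h, true_imp_iff]
      exact isClosed_le (hfrob.comp (continuous_const.matrix_mul hA))
        (hfrob.comp (hU.matrix_transpose.matrix_mul hA))
    · simp only [h, false_imp_iff]
      exact isClosed_const
  have h4 : IsClosed {p : Z | τ ≤ ((Matrix.of p.2.1)ᵀ *ᵥ e) ⬝ᵥ ((Matrix.of p.2.1)ᵀ *ᵥ e)} :=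
    isClosed_le continuous_const
      ((hU.matrix_transpose.matrix_mulVec continuous_const).dotProduct
        (hU.matrix_transpose.matrix_mulVec continuous_const))
  have hF := ((h1.inter h2).inter (isClosed_iInter h3)).inter h4
  convert measurableSet_image_fst_of_isClosed hF using 1
  ext R
  constructor
  · rintro ⟨U, ⟨h1, ⟨W, hW⟩, h3⟩, hτ⟩
    exact ⟨(R, (fun i j => U i j, fun i j => W i j)),
      ⟨⟨⟨h1, hW⟩, Set.mem_iInter.2 h3⟩, hτ⟩, rfl⟩
  · rintro ⟨⟨R', p⟩, ⟨⟨⟨h1, h2⟩, h3⟩, h4⟩, rfl⟩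
    exact ⟨_, ⟨h1, ⟨_, h2⟩, Set.mem_iInter.1 h3⟩, h4⟩

lemma measurable_tailReflection {m : ℕ} (Uf : Matrix (Fin m) (Fin m) ℝ) (r : ℕ) (x : Fin m → ℝ)
    (i j : Fin m) : Measurable fun g => tailReflection Uf r x g i j := by
  have h1 : Measurable fun g : Fin m → ℝ => tailVec Uf r g := by
    refine measurable_pi_lambda _ fun p => ?_
    simp only [tailVec, Matrix.mulVec, dotProduct]
    refine Finset.measurable_sum _ fun q _ => ?_
    by_cases h : (q : ℕ) < r
    · simp [h]
    · simp only [h, if_false]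
      exact (measurable_pi_apply q).const_mul _
  have h2 : ∀ p, Measurable fun g : Fin m → ℝ => tailVec Uf r g p := fun p =>
    measurable_pi_iff.1 h1 p
  have hz : ∀ p, Measurable fun g : Fin m → ℝ => (tailVec Uf r x -
    (√(tailVec Uf r x ⬝ᵥ tailVec Uf r x) / √(tailVec Uf r g ⬝ᵥ tailVec Uf r g)) •
      tailVec Uf r g) p := by
    intro p
    simp only [Pi.sub_apply, Pi.smul_apply, smul_eq_mul, dotProduct]
    fun_prop
  simp only [tailReflection, householder, Matrix.sub_apply, Matrix.smul_apply, smul_eq_mul,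
    Matrix.vecMulVec_apply]
  refine measurable_const.sub (Measurable.mul (measurable_const.div ?_) ((hz i).mul (hz j)))
  simp only [dotProduct]
  exact Finset.measurable_sum _ fun p _ => (hz p).mul (hz p)

/-- The key probabilistic estimate: averaging over the reflections that fix the column space of
`C`, the direction of `tailVec Uf r x` becomes uniform on its orthogonal complement, hence is unlikely to
be close to the `k`-dimensional top singular subspace. -/
lemma gaussMeasure_badEvent_le {m n d k r : ℕ} {σ : NNReal} (hσ : σ ≠ 0)
    {Uf : Matrix (Fin m) (Fin m) ℝ} (hUf : Ufᵀ * Uf = 1) {C : Matrix (Fin m) (Fin n) ℝ}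
    (hC : ∀ j : Fin m, r ≤ j → ∀ q, (Ufᵀ * C) j q = 0) (S : Matrix (Fin n) (Fin d) ℝ)
    {x : Fin m → ℝ} (hx : tailVec Uf r x ⬝ᵥ tailVec Uf r x ≤ 1) {τ t : ℝ} (hm : 0 < m)
    (hr : (r : ℝ) ≤ (m : ℝ) / 4) (ht : 0 ≤ t) (hτ : 4 * (k * t) ≤ m * τ) (hk : 0 < k) :
    gaussMeasure m n σ (badEvent k C S (tailVec Uf r x) τ) ≤
      ENNReal.ofReal (Real.exp (-(m : ℝ) / 8)) + k * ENNReal.ofReal (2 * Real.exp (-t / 2)) := by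
  set E := badEvent k C S (tailVec Uf r x) τ with hE
  set B := ENNReal.ofReal (Real.exp (-(m : ℝ) / 8)) + k * ENNReal.ofReal (2 * Real.exp (-t / 2))
  have hEm : MeasurableSet E := measurableSet_badEvent _ _ _ _ _
  let Φ : (Fin m → ℝ) × (Fin m → Fin n → ℝ) → (Fin m → Fin n → ℝ) := fun p i j =>
    (tailReflection Uf r x p.1 * Matrix.of p.2) i j
  have hΦ : Measurable Φ := by
    refine measurable_pi_lambda _ fun i => measurable_pi_lambda _ fun j => ?_
    simp only [Φ, Matrix.mul_apply, Matrix.of_apply]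
    refine Finset.measurable_sum _ fun l _ => ?_
    refine ((measurable_tailReflection Uf r x i l).comp measurable_fst).mul ?_
    exact (measurable_pi_apply j).comp ((measurable_pi_apply l).comp measurable_snd)
  have hT : MeasurableSet (Φ ⁻¹' E) := hΦ hEm
  have hsec : ∀ g, gaussMeasure m n σ (Prod.mk g ⁻¹' (Φ ⁻¹' E)) = gaussMeasure m n σ E := by
    intro g
    have h1 := gaussMeasure_map_orthogonal (n := n) σ (O := tailReflection Uf r x g)
      (householder_orthogonal _)
    conv_rhs => rw [← h1]
    have h3 : Measurable fun R : Fin m → Fin n → ℝ => Φ (g, R) := hΦ.comp measurable_prodMk_left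
    exact (Measure.map_apply h3 hEm).symm
  have h2 : ((stdGauss m).prod (gaussMeasure m n σ)) (Φ ⁻¹' E) = gaussMeasure m n σ E := by
    rw [Measure.prod_apply hT]
    simp [hsec]
  -- Tonelli: fix the noise `R` and integrate over the direction `g` first.
  rw [← h2, Measure.prod_apply_symm hT]
  have hae : ∀ᵐ R ∂gaussMeasure m n σ,
      stdGauss m ((fun g => (g, R)) ⁻¹' (Φ ⁻¹' E)) ≤ B := by
    filter_upwards [(gaussMeasure_absolutelyContinuous m n hσ).ae_le (ae_unique_proj k C S)]
      with R hR
    by_cases hex : ∃ U₀ : Matrix (Fin m) (Fin k) ℝ, IsKyFanTop (addNoise C R * S) U₀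
    · obtain ⟨U₀, hU₀⟩ := hex
      refine (measure_mono fun g hg => mem_union_of_reflection_mem_badEvent hUf hC S R hx hm hτ
        (U₀ := U₀) (fun U hU => hR _ _ hU hU₀) hg hk).trans ?_
      refine (measure_union_le _ _).trans (add_le_add (stdGauss_norm_tail hr) ?_)
      refine (measure_iUnion_le _).trans ?_
      rw [tsum_fintype]
      calc _ ≤ ∑ _l : Fin k, ENNReal.ofReal (2 * Real.exp (-t / 2)) := by
            refine Finset.sum_le_sum fun l _ => ?_
            have := stdGauss_linear_tail
              (fun j : Fin m => if (j : ℕ) < r then 0 else (Ufᵀ * U₀) j l) ?_ (Real.sqrt_nonneg t)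
            · rwa [Real.sq_sqrt ht] at this
            · calc ∑ j : Fin m, (if (j : ℕ) < r then 0 else (Ufᵀ * U₀) j l) ^ 2
                  ≤ ∑ j : Fin m, ((Ufᵀ * U₀) j l) ^ 2 := by
                    refine Finset.sum_le_sum fun j _ => ?_
                    split_ifs
                    · simpa using sq_nonneg _
                    · exact le_rfl
                _ = ((Ufᵀ * U₀)ᵀ * (Ufᵀ * U₀)) l l := by
                    rw [Matrix.mul_apply]; simp [sq]
                _ = 1 := by
                    rw [Matrix.transpose_mul, Matrix.transpose_transpose, Matrix.mul_assoc,
                      ← Matrix.mul_assoc Uf, mul_eq_one_comm.1 hUf, Matrix.one_mul, hU₀.1,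
                      Matrix.one_apply_eq]
                _ ≤ 1 := le_rfl
        _ = _ := by simp
    · have hempty : (fun g => (g, R)) ⁻¹' (Φ ⁻¹' E) = ∅ := by
        rw [Set.eq_empty_iff_forall_notMem]
        intro g hg
        refine hex ?_
        obtain ⟨U, hU, -⟩ := hg
        exact ⟨_, isKyFanTop_of_reflection hC S R hU⟩
      rw [hempty, measure_empty]
      exact bot_le
  calc _ ≤ ∫⁻ _, B ∂gaussMeasure m n σ := lintegral_mono_ae hae
    _ = B := by simp

/-! ### Sampling and the union bound -/

/-- The matrix that selects and rescales the sampled columns `c`. -/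
noncomputable def sampleMat {n d : ℕ} (p : Fin n → ℝ) (c : Fin d → Fin n) :
    Matrix (Fin n) (Fin d) ℝ :=
  Matrix.of fun l j => if l = c j then (√(d * p (c j)))⁻¹ else 0

lemma sampleA_eq_mul {m n d : ℕ} (M : Matrix (Fin m) (Fin n) ℝ) (p : Fin n → ℝ)
    (c : Fin d → Fin n) : sampleA d M p c = M * sampleMat p c := by
  ext i j
  simp [sampleA, sampleMat, Matrix.mul_apply, div_eq_mul_inv]

lemma isProbabilityMeasure_discMeasure_s7 {n : ℕ} (hn : 0 < n) :
    IsProbabilityMeasure (discMeasure fun _ : Fin n => (n : ℝ)⁻¹) := by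
  constructor
  have hn' : (0 : ℝ) < n := by exact_mod_cast hn
  simp only [discMeasure, Measure.coe_finsetSum, Finset.sum_apply, Measure.smul_apply,
    measure_univ, smul_eq_mul, mul_one, Finset.sum_const, Finset.card_univ, Fintype.card_fin,
    nsmul_eq_mul]
  rw [← ENNReal.ofReal_natCast, ← ENNReal.ofReal_mul hn'.le, mul_inv_cancel₀ hn'.ne',
    ENNReal.ofReal_one]

/-- A bound on the failure probability for each fixed value of a finite second coordinate bounds
the failure probability under the product measure; no measurability is needed. -/
lemma one_sub_le_prod {X Y : Type*} [MeasurableSpace X] [MeasurableSpace Y] [Fintype Y]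
    [MeasurableSingletonClass Y] (μ : Measure X) (ν : Measure Y) [IsProbabilityMeasure μ]
    [IsProbabilityMeasure ν] (good : X → Y → Prop) {ε : ENNReal}
    (h : ∀ y, μ {x | ¬ good x y} ≤ ε) : 1 - ε ≤ (μ.prod ν) {ω | good ω.1 ω.2} := by
  rw [tsub_le_iff_right]
  have hcov : (Set.univ : Set (X × Y)) ⊆
      {ω | good ω.1 ω.2} ∪ ⋃ y, {x | ¬ good x y} ×ˢ {y} := by
    rintro ⟨x, y⟩ -
    by_cases hg : good x y
    · exact Or.inl hg
    · exact Or.inr (Set.mem_iUnion.2 ⟨y, hg, rfl⟩)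
  have h2 : (μ.prod ν) (⋃ y, {x | ¬ good x y} ×ˢ {y}) ≤ ε := by
    refine (measure_iUnion_le _).trans ?_
    rw [tsum_fintype]
    calc ∑ y, (μ.prod ν) ({x | ¬ good x y} ×ˢ {y}) = ∑ y, μ {x | ¬ good x y} * ν {y} := by
          simp only [Measure.prod_prod]
      _ ≤ ∑ y, ε * ν {y} := Finset.sum_le_sum fun y _ => by gcongr; exact h y
      _ = ε := by
          rw [← Finset.mul_sum, sum_measure_singleton]
          simp
  calc (1 : ENNReal) = (μ.prod ν) Set.univ := measure_univ.symm
    _ ≤ _ := measure_mono hcov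
    _ ≤ _ := measure_union_le _ _
    _ ≤ _ := by gcongr

lemma one_le_log_div {m r : ℕ} {δ : ℝ} (hδ : 0 < δ) (hδ1 : δ < 1) (hr0 : 0 < r)
    (hr : (r : ℝ) ≤ (m : ℝ) / 4) : 1 ≤ Real.log (m / δ) := by
  have hr' : (1 : ℝ) ≤ r := by exact_mod_cast hr0
  have hm : (4 : ℝ) ≤ m := by linarith
  rw [Real.le_log_iff_exp_le (by positivity), le_div_iff₀ hδ]
  have := Real.exp_one_lt_d9
  nlinarith [Real.exp_pos 1]

/-- The union bound over the at most `r` ranks and the `m` rows costs at most `δ`. -/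
lemma union_bound_le {m n r : ℕ} {δ : ℝ} (hδ : 0 < δ) (hδ1 : δ < 1) (hmn : m ≤ n) (hr0 : 0 < r)
    (hr : (r : ℝ) ≤ (m : ℝ) / 4) (hlog : Real.log (2 * n / δ) ≤ (m : ℝ) / 64) :
    r * (m * (Real.exp (-(m : ℝ) / 8) + r * (2 * Real.exp (-(10 * Real.log (m / δ)) / 2)))) ≤ δ := by
  have hr' : (1 : ℝ) ≤ r := by exact_mod_cast hr0
  have hm : (4 : ℝ) ≤ m := by linarith
  have hmn' : (m : ℝ) ≤ n := by exact_mod_cast hmn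
  have hn : (0 : ℝ) < n := by linarith
  set q : ℝ := δ / m with hq
  have hq0 : 0 < q := by positivity
  have hqm : q * m = δ := by rw [hq]; field_simp
  have hq1 : q ≤ 1 := by nlinarith
  have ha : Real.exp (-(m : ℝ) / 8) ≤ q ^ 2 := by
    have h1 : Real.exp (-(m : ℝ) / 64) ≤ q := by
      have h2 : Real.exp (-(m : ℝ) / 64) ≤ Real.exp (-Real.log (2 * n / δ)) := by
        rw [Real.exp_le_exp]; linarith
      rw [Real.exp_neg, Real.exp_log (by positivity), inv_div] at h2
      refine h2.trans ?_
      rw [hq]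
      gcongr
      linarith
    calc Real.exp (-(m : ℝ) / 8) = Real.exp (-(m : ℝ) / 64) ^ 8 := by
          rw [← Real.exp_nat_mul]; congr 1; push_cast; ring
      _ ≤ q ^ 8 := by gcongr
      _ ≤ q ^ 2 := pow_le_pow_of_le_one hq0.le hq1 (by norm_num)
  have hb : Real.exp (-(10 * Real.log (m / δ)) / 2) ≤ q ^ 3 := by
    have : Real.exp (-(10 * Real.log (m / δ)) / 2) = q ^ 5 := by
      have h1 : -(10 * Real.log (m / δ)) / 2 = ((5 : ℕ) : ℝ) * Real.log q := by
        rw [hq, ← inv_div (m : ℝ) δ, Real.log_inv]; push_cast; ring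
      rw [h1, Real.exp_nat_mul, Real.exp_log hq0]
    rw [this]
    exact pow_le_pow_of_le_one hq0.le hq1 (by norm_num)
  have h1 : r * (m * (Real.exp (-(m : ℝ) / 8) +
      r * (2 * Real.exp (-(10 * Real.log (m / δ)) / 2)))) ≤
      (m / 4) * (m * (q ^ 2 + (m / 4) * (2 * q ^ 3))) := by gcongr
  have h2 : (m / 4) * (m * (q ^ 2 + (m / 4) * (2 * q ^ 3))) =
      (q * m) ^ 2 / 4 + (q * m) ^ 3 / 8 := by ring
  rw [h2, hqm] at h1
  refine h1.trans ?_
  have h3 : δ ^ 2 ≤ δ := by nlinarith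
  have h4 : δ ^ 3 ≤ δ := by nlinarith
  linarith

/-- For `r̂ = 0` both sides of the bound are zero, the right one by division by zero. -/
lemma incohU_le_div_of_eq_zero {m k : ℕ} (hk : k = 0) (U : Matrix (Fin m) (Fin k) ℝ) (x : ℝ) :
    incohU U ≤ x / k := by
  subst hk
  simp [incohU]

lemma row_le_incoh {m n r : ℕ} (hr : 0 < r) (Ubar : Matrix (Fin m) (Fin r) ℝ)
    (Vbar : Matrix (Fin n) (Fin r) ℝ) (i : Fin m) :
    m * rowNormSq Ubar i ≤ r * incoh Ubar Vbar := by
  have hr' : (0 : ℝ) < r := by exact_mod_cast hr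
  have h1 : (m : ℝ) / r * rowNormSq Ubar i ≤ incoh Ubar Vbar :=
    (le_ciSup (f := fun i => (m : ℝ) / r * rowNormSq Ubar i)
      (Set.finite_range _).bddAbove i).trans (le_max_left _ _)
  rw [div_mul_eq_mul_div, div_le_iff₀ hr'] at h1
  linarith

/-- The average of `(m / r) ‖Ū_(i)‖²` over the rows is one. -/
lemma one_le_incoh {m n r : ℕ} (hm : 0 < m) (hr : 0 < r) {Ubar : Matrix (Fin m) (Fin r) ℝ}
    (hU : Ubarᵀ * Ubar = 1) (Vbar : Matrix (Fin n) (Fin r) ℝ) : 1 ≤ incoh Ubar Vbar := by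
  have hr' : (0 : ℝ) < r := by exact_mod_cast hr
  have hm' : (0 : ℝ) < m := by exact_mod_cast hm
  have h1 : ∑ i, m * rowNormSq Ubar i ≤ ∑ _i : Fin m, r * incoh Ubar Vbar :=
    Finset.sum_le_sum fun i _ => row_le_incoh hr Ubar Vbar i
  rw [← Finset.mul_sum, sum_rowNormSq hU] at h1
  simp only [Finset.sum_const, Finset.card_univ, Fintype.card_fin, nsmul_eq_mul] at h1
  have h2 : (r : ℝ) * 1 ≤ r * incoh Ubar Vbar := by
    rw [mul_one]; exact le_of_mul_le_mul_left h1 hm'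
  exact le_of_mul_le_mul_left h2 hr'

/-- The deterministic part: small projections of the tails of the coordinate vectors onto the span of
`U` give the incoherence bound. The column space part costs `2 r μ` and the tail part `80 r L`, both
at most a multiple of `r μ L` since `μ, L ≥ 1`. -/
lemma incohU_le_of_tail_le {m n r k : ℕ} (hm : 0 < m) (hrm : r ≤ m) (hr : 0 < r) (hk : 0 < k)
    {Uf : Matrix (Fin m) (Fin m) ℝ} (hUf : Ufᵀ * Uf = 1) (Vbar : Matrix (Fin n) (Fin r) ℝ)
    {U : Matrix (Fin m) (Fin k) ℝ} (hU : Uᵀ * U = 1) {L : ℝ} (hL : 1 ≤ L)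
    (h : ∀ i, (Uᵀ *ᵥ tailVec Uf r (Uf i)) ⬝ᵥ (Uᵀ *ᵥ tailVec Uf r (Uf i)) ≤ 40 * r * L / m) :
    incohU U ≤ 82 * r * incoh (Uf.submatrix id (Fin.castLE hrm)) Vbar * L / k := by
  have hm' : (0 : ℝ) < m := by exact_mod_cast hm
  have hk' : (0 : ℝ) < k := by exact_mod_cast hk
  have hr' : (0 : ℝ) < r := by exact_mod_cast hr
  have : Nonempty (Fin m) := ⟨⟨0, hm⟩⟩
  set Ubar := Uf.submatrix id (Fin.castLE hrm) with hUbar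
  have hUU : Ubarᵀ * Ubar = 1 := by
    ext a b
    have := congrFun (congrFun hUf (Fin.castLE hrm a)) (Fin.castLE hrm b)
    rw [Matrix.mul_apply] at this ⊢
    simpa [hUbar, Matrix.one_apply, Fin.ext_iff] using this
  have hμ := one_le_incoh hm hr hUU Vbar
  refine ciSup_le fun i => ?_
  have h1 := rowNormSq_le_add hrm hUf hU i
  have h2 := row_le_incoh hr Ubar Vbar i
  have h3 : m * ((Uᵀ *ᵥ tailVec Uf r (Uf i)) ⬝ᵥ (Uᵀ *ᵥ tailVec Uf r (Uf i))) ≤ 40 * r * L := by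
    have := h i
    rw [le_div_iff₀ hm'] at this
    linarith
  set μ := incoh Ubar Vbar
  rw [div_mul_eq_mul_div]
  refine div_le_div_of_nonneg_right ?_ hk'.le
  have h4 : r * μ ≤ r * μ * L := le_mul_of_one_le_right (by positivity) hL
  have h5 : r * L ≤ r * μ * L := by
    have : r * L * 1 ≤ r * L * μ := by gcongr
    linarith
  calc m * rowNormSq U i ≤ m * (2 * rowNormSq Ubar i +
        2 * ((Uᵀ *ᵥ tailVec Uf r (Uf i)) ⬝ᵥ (Uᵀ *ᵥ tailVec Uf r (Uf i)))) := by gcongr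
    _ ≤ 82 * r * μ * L := by linarith

lemma tailVec_row_le_one {m : ℕ} {Uf : Matrix (Fin m) (Fin m) ℝ} (hUf : Ufᵀ * Uf = 1) (r : ℕ)
    (i : Fin m) : tailVec Uf r (Uf i) ⬝ᵥ tailVec Uf r (Uf i) ≤ 1 := by
  rw [tailVec_dotProduct_self hUf]
  refine le_trans (Finset.sum_le_sum fun j _ => ?_) (rowNormSq_le_one hUf i)
  split_ifs
  · simpa using sq_nonneg _
  · exact le_rfl

/-- For a fixed choice of columns, the incoherence bound fails with probability at most `δ`. -/
lemma gaussMeasure_failure_le {m n r d : ℕ} (hmn : m ≤ n) {C : Matrix (Fin m) (Fin n) ℝ}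
    (hCr : C.rank = r) (σ : NNReal) {Ubar : Matrix (Fin m) (Fin r) ℝ}
    {Vbar : Matrix (Fin n) (Fin r) ℝ} (hsvd : IsTopSVD C Ubar Vbar) {δ : ℝ} (hδ : 0 < δ)
    (hδ1 : δ < 1) (hr0 : 0 < r) (hr : (r : ℝ) ≤ (m : ℝ) / 4)
    (hlog : Real.log (2 * n / δ) ≤ (m : ℝ) / 64) (S : Matrix (Fin n) (Fin d) ℝ) :
    gaussMeasure m n σ {R | ¬ ∀ U : Matrix (Fin m) (Fin (min r (addNoise C R * S).rank)) ℝ,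
      IsTopLeftSingular (addNoise C R * S) U →
        incohU U ≤ 82 * r * incoh Ubar Vbar * Real.log (m / δ) /
          ((min r (addNoise C R * S).rank : ℕ) : ℝ)} ≤ ENNReal.ofReal δ := by
  obtain ⟨hrm, -, Uf, Vf, s, hUf, hVf, hs, hs0, hA, rfl, -⟩ := hsvd
  have hC : ∀ j : Fin m, r ≤ j → ∀ q, (Ufᵀ * C) j q = 0 := fun j hj q =>
    transpose_mul_row_eq_zero hUf hVf hs hs0 hA j (hCr ▸ hj) q
  have hm : 0 < m := lt_of_lt_of_le hr0 hrm
  have hm' : (0 : ℝ) < m := by exact_mod_cast hm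
  have hL := one_le_log_div hδ hδ1 hr0 hr
  set L := Real.log (m / δ) with hLdef
  set τ : ℝ := 40 * r * L / m with hτ
  have hτ0 : 0 ≤ τ := by positivity
  -- A failure exhibits a rank `k ≤ r` and a row `i` with a large tail projection.
  have hfail : ∀ R : Fin m → Fin n → ℝ,
      (¬ ∀ U : Matrix (Fin m) (Fin (min r (addNoise C R * S).rank)) ℝ,
        IsTopLeftSingular (addNoise C R * S) U →
          incohU U ≤ 82 * r * incoh (Uf.submatrix id (Fin.castLE hrm)) Vbar * L /
            ((min r (addNoise C R * S).rank : ℕ) : ℝ)) →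
      ∃ k, 0 < k ∧ k ≤ r ∧ ∃ i, ∃ U : Matrix (Fin m) (Fin k) ℝ, IsKyFanTop (addNoise C R * S) U ∧
        τ < (Uᵀ *ᵥ tailVec Uf r (Uf i)) ⬝ᵥ (Uᵀ *ᵥ tailVec Uf r (Uf i)) := by
    intro R hR
    push Not at hR
    obtain ⟨U, hU, hlt⟩ := hR
    have hk : 0 < min r (addNoise C R * S).rank := by
      by_contra h0
      exact absurd (incohU_le_div_of_eq_zero (Nat.eq_zero_of_not_pos h0) U _) (not_le.2 hlt)
    have hKF := hU.isKyFanTop (min_le_right _ _)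
    refine ⟨_, hk, min_le_left _ _, ?_⟩
    by_contra hcon
    push Not at hcon
    exact absurd (incohU_le_of_tail_le hm hrm hr0 hk hUf Vbar hKF.1 hL fun i => hcon i U hKF)
      (not_le.2 hlt)
  by_cases hσ : σ = 0
  · subst hσ
    -- Without noise every top singular vector lies in the column space of `C`.
    refine le_of_eq_of_le ?_ bot_le
    refine measure_mono_null ?_ (ae_iff.1 (ae_eq_zero_gaussMeasure m n))
    intro R hR hR0
    obtain ⟨k, -, -, i, U, ⟨-, ⟨W, hW⟩, -⟩, hlt⟩ := hfail R hR
    have h0 : addNoise C R = C := by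
      rw [hR0]; ext a b; simp [addNoise]
    have : Uᵀ *ᵥ tailVec Uf r (Uf i) = 0 := by
      rw [hW, h0, Matrix.mulVec_transpose, Matrix.mul_assoc, ← Matrix.vecMul_vecMul,
        tailVec_vecMul hC, Matrix.zero_vecMul]
    rw [this, dotProduct_zero] at hlt
    exact absurd hlt (not_lt.2 hτ0)
  have hsub : {R | ¬ ∀ U : Matrix (Fin m) (Fin (min r (addNoise C R * S).rank)) ℝ,
      IsTopLeftSingular (addNoise C R * S) U →
        incohU U ≤ 82 * r * incoh (Uf.submatrix id (Fin.castLE hrm)) Vbar * L /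
          ((min r (addNoise C R * S).rank : ℕ) : ℝ)} ⊆
      ⋃ k ∈ Finset.Icc 1 r, ⋃ i : Fin m, badEvent k C S (tailVec Uf r (Uf i)) τ := by
    intro R hR
    obtain ⟨k, hk0, hkr, i, U, hU, hlt⟩ := hfail R hR
    simp only [Set.mem_iUnion]
    exact ⟨k, Finset.mem_Icc.2 ⟨hk0, hkr⟩, i, U, hU, hlt.le⟩
  set a : ℝ := Real.exp (-(m : ℝ) / 8)
  set b : ℝ := 2 * Real.exp (-(10 * L) / 2)
  calc _ ≤ _ := measure_mono hsub
    _ ≤ ∑ k ∈ Finset.Icc 1 r, ∑ _i : Fin m, ENNReal.ofReal (a + r * b) := by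
        refine (measure_biUnion_finset_le _ _).trans (Finset.sum_le_sum fun k hk => ?_)
        refine (measure_iUnion_le _).trans ?_
        rw [tsum_fintype]
        refine Finset.sum_le_sum fun i _ => ?_
        obtain ⟨hk0, hkr⟩ := Finset.mem_Icc.1 hk
        have hkr' : (k : ℝ) ≤ r := by exact_mod_cast hkr
        refine (gaussMeasure_badEvent_le (t := 10 * L) hσ hUf hC S (tailVec_row_le_one hUf r i) hm
          hr (by positivity) ?_ hk0).trans ?_
        · rw [hτ, mul_div_cancel₀ _ hm'.ne']
          have : k * L ≤ r * L := by gcongr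
          linarith
        · have hab : ENNReal.ofReal (a + r * b) = ENNReal.ofReal a + r * ENNReal.ofReal b := by
            rw [ENNReal.ofReal_add (by positivity) (by positivity),
              ENNReal.ofReal_mul (by positivity), ENNReal.ofReal_natCast]
          rw [hab]
          gcongr
    _ = ENNReal.ofReal (r * (m * (a + r * b))) := by
        rw [ENNReal.ofReal_mul (by positivity), ENNReal.ofReal_mul (by positivity),
          ENNReal.ofReal_natCast, ENNReal.ofReal_natCast]
        simp
    _ ≤ ENNReal.ofReal δ := ENNReal.ofReal_le_ofReal (union_bound_le hδ hδ1 hmn hr0 hr hlog)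

/-- Lemma 4, eq. (5): for `M = C + R` with `rank(C) = r` and i.i.d. `N(0,σ²)`
noise, if `r ≤ d ≤ m/4` and `ln(2n/δ) ≤ m/64`, then with probability at least `1 - δ`,
`μ̂(r̂) ≤ c · r μ(r) ln(m/δ)/r̂` for the top-`r̂` left singular vectors `Û` of the matrix `A` of
`d` uniformly sampled, rescaled columns, where `r̂ = min(r, rank A)`. -/
theorem statement7 :
    ∃ c : ℝ, 0 < c ∧
      ∀ (m n r d : ℕ), m ≤ n →
      ∀ C : Matrix (Fin m) (Fin n) ℝ, C.rank = r →
      ∀ (σ : NNReal) (Ubar : Matrix (Fin m) (Fin r) ℝ) (Vbar : Matrix (Fin n) (Fin r) ℝ),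
        IsTopSVD C Ubar Vbar →
      ∀ δ : ℝ, 0 < δ →
        r ≤ d → (d : ℝ) ≤ (m : ℝ) / 4 → Real.log (2 * n / δ) ≤ (m : ℝ) / 64 →
        1 - ENNReal.ofReal δ ≤
          ((gaussMeasure m n σ).prod
              (Measure.pi fun _ : Fin d => discMeasure fun _ : Fin n => (n : ℝ)⁻¹))
            {ω | ∀ U : Matrix (Fin m)
                (Fin (min r (sampleA d (addNoise C ω.1) (fun _ => (n : ℝ)⁻¹) ω.2).rank)) ℝ,
              IsTopLeftSingular (sampleA d (addNoise C ω.1) (fun _ => (n : ℝ)⁻¹) ω.2) U →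
              incohU U ≤ c * r * incoh Ubar Vbar * Real.log (m / δ) /
                ((min r (sampleA d (addNoise C ω.1) (fun _ => (n : ℝ)⁻¹) ω.2).rank : ℕ) : ℝ)} := by
  refine ⟨82, by norm_num, ?_⟩
  intro m n r d hmn C hCr σ Ubar Vbar hsvd δ hδ hrd hdm hlog
  -- For `1 ≤ δ` the claimed lower bound on the probability is zero.
  rcases le_or_gt 1 δ with hδ1 | hδ1
  · rw [tsub_eq_zero_of_le (by rwa [ENNReal.one_le_ofReal])]
    exact bot_le
  have hd : ∀ _ : Fin d, IsProbabilityMeasure (discMeasure fun _ : Fin n => (n : ℝ)⁻¹) := by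
    intro i
    have hd1 : (0 : ℝ) < d := by exact_mod_cast i.pos
    have hm : 0 < m := by
      have : (0 : ℝ) < m := by linarith
      exact_mod_cast this
    exact isProbabilityMeasure_discMeasure_s7 (hm.trans_le hmn)
  have hsf : ∀ _ : Fin d, SigmaFinite (discMeasure fun _ : Fin n => (n : ℝ)⁻¹) := fun i =>
    have := hd i
    inferInstance
  have hprob : IsProbabilityMeasure
      (Measure.pi fun _ : Fin d => discMeasure fun _ : Fin n => (n : ℝ)⁻¹) := inferInstance
  refine one_sub_le_prod _ _ (fun R c => ∀ U : Matrix (Fin m)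
    (Fin (min r (sampleA d (addNoise C R) (fun _ => (n : ℝ)⁻¹) c).rank)) ℝ,
      IsTopLeftSingular (sampleA d (addNoise C R) (fun _ => (n : ℝ)⁻¹) c) U →
        incohU U ≤ 82 * r * incoh Ubar Vbar * Real.log (m / δ) /
          ((min r (sampleA d (addNoise C R) (fun _ => (n : ℝ)⁻¹) c).rank : ℕ) : ℝ)) fun c => ?_
  rcases Nat.eq_zero_or_pos r with hr0 | hr0
  · refine le_of_eq_of_le (measure_mono_null (t := ∅) ?_ measure_empty) bot_le
    intro R hR
    refine hR fun U _ => incohU_le_div_of_eq_zero ?_ U _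
    rw [hr0, Nat.zero_min]
  · have hr : (r : ℝ) ≤ (m : ℝ) / 4 := le_trans (by exact_mod_cast hrd) hdm
    have := gaussMeasure_failure_le hmn hCr σ hsvd hδ hδ1 hr0 hr hlog
      (sampleMat (fun _ => (n : ℝ)⁻¹) c)
    refine (measure_mono fun R hR => ?_).trans this
    have h := sampleA_eq_mul (addNoise C R) (fun _ => (n : ℝ)⁻¹) c
    rw [Set.mem_ofPred_eq] at hR ⊢
    rw [← h]
    exact hR
end
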